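/- Assume p > 0, ρ > 0, that the Dirichlet eigenpair hypothesis holds for (Ω, λ₁, φ), that μ ≤ C_{H,Ω}, and that (q − 1)·|γ_*| > 2 (equivalently, q > 1 + 2/|γ_*|). Then the inequality (Z): −Δu − μ|x|^{−2}u ≥ (∫_{C_Ω^ρ} u(y)^p dy)·u^q has a positive solution in C_Ω^ρ if and only if p·|γ_*| > N. -/

import Mathlib

open MeasureTheory Real Set
open scoped ENNReal NNReal

noncomputable section

/-- Euclidean space `ℝ^N`. -/
abbrev Euc (N : ℕ) := EuclideanSpace ℝ (Fin N)

/-- The Euclidean Laplacian `Δu(x) = ∑ ∂²u/∂xᵢ²(x)`, the trace of the Hessian. -/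
def lap (N : ℕ) (u : Euc N → ℝ) (x : Euc N) : ℝ :=
  ∑ i : Fin N,
    iteratedFDeriv ℝ 2 u x ![EuclideanSpace.single i 1, EuclideanSpace.single i 1]

/-- The open cone `C_Ω^ρ = {x : |x| > ρ, x/|x| ∈ Ω}`. -/
def coneGT (N : ℕ) (ρ : ℝ) (Ω : Set (Euc N)) : Set (Euc N) :=
  {x | ρ < ‖x‖ ∧ ‖x‖⁻¹ • x ∈ Ω}

/-- The full open cone `C_Ω = {x ≠ 0 : x/|x| ∈ Ω}`. -/
def cone (N : ℕ) (Ω : Set (Euc N)) : Set (Euc N) :=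
  {x | x ≠ 0 ∧ ‖x‖⁻¹ • x ∈ Ω}

/-- `Ω` is a nonempty, connected, relatively open subset of the unit sphere `S^{N-1}`. -/
def IsConeDomain (N : ℕ) (Ω : Set (Euc N)) : Prop :=
  Ω ⊆ Metric.sphere (0 : Euc N) 1 ∧ IsConnected Ω ∧
    IsOpen {ω : Metric.sphere (0 : Euc N) 1 | (ω : Euc N) ∈ Ω}

/-- The convolution `(|x|^{-α} * f)(x) = ∫_{C_Ω^ρ} f(y)|x-y|^{-α} dy`, valued in `[0,∞]`. -/
def rieszConv (N : ℕ) (α ρ : ℝ) (Ω : Set (Euc N)) (f : Euc N → ℝ) (x : Euc N) : ℝ≥0∞ :=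
  ∫⁻ y in coneGT N ρ Ω, ENNReal.ofReal (f y * ‖x - y‖ ^ (-α))

/-- Dirichlet eigenpair hypothesis for `(Ω, λ₁, φ)`: `φ` is continuous on the closure of `Ω`,
positive on `Ω`, vanishing on the relative boundary, with maximum `1`, and its 0-homogeneous
extension `Φ(x) = φ(x/|x|)` is `C²` on the open cone and satisfies `ΔΦ = -λ₁|x|⁻²Φ`. -/
structure DirichletEigenpair (N : ℕ) (Ω : Set (Euc N)) (lam1 : ℝ) (φ : Euc N → ℝ) : Prop where
  contOn : ContinuousOn φ (closure Ω)
  pos : ∀ ω ∈ Ω, 0 < φ ω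
  bdryZero : ∀ ω ∈ closure Ω \ Ω, φ ω = 0
  le_one : ∀ ω ∈ closure Ω, φ ω ≤ 1
  max_one : ∃ ω ∈ closure Ω, φ ω = 1
  smoothExt : ContDiffOn ℝ 2 (fun x => φ (‖x‖⁻¹ • x)) (cone N Ω)
  eigen : ∀ x ∈ cone N Ω,
    lap N (fun y => φ (‖y‖⁻¹ • y)) x = -lam1 * ‖x‖ ^ (-(2:ℝ)) * φ (‖x‖⁻¹ • x)

/-- The Hardy constant `C_{H,Ω} = λ₁ + ((N-2)/2)²`. -/
def CHconst (N : ℕ) (lam1 : ℝ) : ℝ := lam1 + (((N : ℝ) - 2) / 2) ^ 2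

/-- The smaller root `γ_*` of `γ(γ + N - 2) = λ₁ - μ`. -/
def gammaStar (N : ℕ) (lam1 μ : ℝ) : ℝ :=
  (-((N : ℝ) - 2) - Real.sqrt (((N : ℝ) - 2) ^ 2 + 4 * (lam1 - μ))) / 2

/-- A positive (classical) solution of `(E) : -Δu - μ|x|⁻²u ≥ (|x|^{-α} * uᵖ) u^q` in `C_Ω^ρ`. -/
def IsPosSolE (N : ℕ) (ρ μ α p q : ℝ) (Ω : Set (Euc N)) (u : Euc N → ℝ) : Prop :=
  ContDiffOn ℝ 2 u (coneGT N ρ Ω) ∧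
  ContinuousOn u (closure (coneGT N ρ Ω)) ∧
  (∀ x ∈ coneGT N ρ Ω, 0 < u x) ∧
  (∀ x ∈ coneGT N ρ Ω, rieszConv N α ρ Ω (fun y => u y ^ p) x < ⊤) ∧
  (∀ x ∈ coneGT N ρ Ω,
    (rieszConv N α ρ Ω (fun y => u y ^ p) x).toReal * u x ^ q ≤
      -lap N u x - μ * ‖x‖ ^ (-(2:ℝ)) * u x)

/-- A positive solution of `(Z) : -Δu - μ|x|⁻²u ≥ (∫_{C_Ω^ρ} uᵖ) u^q` in `C_Ω^ρ`. -/
def IsPosSolZ (N : ℕ) (ρ μ p q : ℝ) (Ω : Set (Euc N)) (u : Euc N → ℝ) : Prop :=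
  ContDiffOn ℝ 2 u (coneGT N ρ Ω) ∧
  ContinuousOn u (closure (coneGT N ρ Ω)) ∧
  (∀ x ∈ coneGT N ρ Ω, 0 < u x) ∧
  (∫⁻ y in coneGT N ρ Ω, ENNReal.ofReal (u y ^ p)) < ⊤ ∧
  (∀ x ∈ coneGT N ρ Ω,
    (∫⁻ y in coneGT N ρ Ω, ENNReal.ofReal (u y ^ p)).toReal * u x ^ q ≤
      -lap N u x - μ * ‖x‖ ^ (-(2:ℝ)) * u x)

/-- A positive solution `(u, v)` of the system `(S)` in `C_Ω^ρ`. -/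
def IsPosSolS (N : ℕ) (ρ μ α p q s : ℝ) (Ω : Set (Euc N)) (u v : Euc N → ℝ) : Prop :=
  ContDiffOn ℝ 2 u (coneGT N ρ Ω) ∧ ContinuousOn u (closure (coneGT N ρ Ω)) ∧
  ContDiffOn ℝ 2 v (coneGT N ρ Ω) ∧ ContinuousOn v (closure (coneGT N ρ Ω)) ∧
  (∀ x ∈ coneGT N ρ Ω, 0 < u x) ∧ (∀ x ∈ coneGT N ρ Ω, 0 < v x) ∧
  (∀ x ∈ coneGT N ρ Ω, rieszConv N α ρ Ω (fun y => v y ^ p) x < ⊤) ∧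
  (∀ x ∈ coneGT N ρ Ω,
    (rieszConv N α ρ Ω (fun y => v y ^ p) x).toReal * v x ^ q ≤
      -lap N u x - μ * ‖x‖ ^ (-(2:ℝ)) * u x) ∧
  (∀ x ∈ coneGT N ρ Ω, u x ^ s ≤ -lap N v x - μ * ‖x‖ ^ (-(2:ℝ)) * v x)


/-! ### Calculus of the Laplacian -/

/-- Partial derivative. -/
def pd (N : ℕ) (i : Fin N) (u : Euc N → ℝ) (x : Euc N) : ℝ :=
  fderiv ℝ u x (EuclideanSpace.single i 1)

lemma pd_congr {N : ℕ} {i : Fin N} {f g : Euc N → ℝ} {x : Euc N} (h : f =ᶠ[nhds x] g) :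
    pd N i f x = pd N i g x := by
  unfold pd; rw [h.fderiv_eq]

lemma pd_mul {N : ℕ} {i : Fin N} {f g : Euc N → ℝ} {x : Euc N}
    (hf : DifferentiableAt ℝ f x) (hg : DifferentiableAt ℝ g x) :
    pd N i (fun y => f y * g y) x = f x * pd N i g x + g x * pd N i f x := by
  unfold pd
  rw [fderiv_fun_mul hf hg]; simp

lemma pd_add {N : ℕ} {i : Fin N} {f g : Euc N → ℝ} {x : Euc N}
    (hf : DifferentiableAt ℝ f x) (hg : DifferentiableAt ℝ g x) :
    pd N i (fun y => f y + g y) x = pd N i f x + pd N i g x := by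
  unfold pd
  rw [fderiv_fun_add hf hg]; simp

lemma pd_sub {N : ℕ} {i : Fin N} {f g : Euc N → ℝ} {x : Euc N}
    (hf : DifferentiableAt ℝ f x) (hg : DifferentiableAt ℝ g x) :
    pd N i (fun y => f y - g y) x = pd N i f x - pd N i g x := by
  unfold pd
  rw [fderiv_fun_sub hf hg]; simp

lemma pd_comp {N : ℕ} {i : Fin N} {f : Euc N → ℝ} {θ : ℝ → ℝ} {x : Euc N}
    (hθ : DifferentiableAt ℝ θ (f x)) (hf : DifferentiableAt ℝ f x) :
    pd N i (fun y => θ (f y)) x = deriv θ (f x) * pd N i f x := by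
  unfold pd
  have := (hθ.hasDerivAt.comp_hasFDerivAt x hf.hasFDerivAt).fderiv
  rw [show (fun y => θ (f y)) = θ ∘ f from rfl, this]; simp

lemma ContDiffAt.pd1 {N : ℕ} {f : Euc N → ℝ} {x : Euc N}
    (hf : ContDiffAt ℝ 2 f x) (i : Fin N) : ContDiffAt ℝ 1 (pd N i f) x := by
  unfold pd
  exact (hf.fderiv_right (m := 1) (by norm_num)).clm_apply contDiffAt_const

lemma c2_ev {N : ℕ} {f : Euc N → ℝ} {x : Euc N}
    (hf : ContDiffAt ℝ 2 f x) : ∀ᶠ y in nhds x, DifferentiableAt ℝ f y := by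
  filter_upwards [hf.eventually (by simp)] with y hy
  exact hy.differentiableAt (by simp)

lemma lap_eq {N : ℕ} {u : Euc N → ℝ} {x : Euc N} (hu : ContDiffAt ℝ 2 u x) :
    lap N u x = ∑ i, pd N i (pd N i u) x := by
  unfold lap
  refine Finset.sum_congr rfl fun i _ => ?_
  rw [iteratedFDeriv_two_apply]
  have hd : DifferentiableAt ℝ (fderiv ℝ u) x :=
    (hu.fderiv_right (m := 1) (by norm_num)).differentiableAt (by simp)
  unfold pd
  rw [fderiv_clm_apply hd (by fun_prop)]
  simp

lemma lap_mul {N : ℕ} {f g : Euc N → ℝ} {x : Euc N}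
    (hf : ContDiffAt ℝ 2 f x) (hg : ContDiffAt ℝ 2 g x) :
    lap N (fun y => f y * g y) x =
      f x * lap N g x + g x * lap N f x + 2 * ∑ i, pd N i f x * pd N i g x := by
  rw [lap_eq hf, lap_eq hg, lap_eq (hf.mul hg), Finset.mul_sum, Finset.mul_sum, Finset.mul_sum,
    ← Finset.sum_add_distrib, ← Finset.sum_add_distrib]
  refine Finset.sum_congr rfl fun i _ => ?_
  have h1 : pd N i (fun y => f y * g y) =ᶠ[nhds x]
      fun y => f y * pd N i g y + g y * pd N i f y := by
    filter_upwards [c2_ev hf, c2_ev hg] with y h1 h2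
    exact pd_mul h1 h2
  have df := hf.differentiableAt (by simp)
  have dg := hg.differentiableAt (by simp)
  have dpf := (hf.pd1 i).differentiableAt (by simp)
  have dpg := (hg.pd1 i).differentiableAt (by simp)
  rw [pd_congr h1, pd_add (f := fun y => f y * pd N i g y) (g := fun y => g y * pd N i f y)
      (df.mul dpg) (dg.mul dpf), pd_mul df dpg, pd_mul dg dpf]
  ring

lemma lap_add {N : ℕ} {f g : Euc N → ℝ} {x : Euc N}
    (hf : ContDiffAt ℝ 2 f x) (hg : ContDiffAt ℝ 2 g x) :
    lap N (fun y => f y + g y) x = lap N f x + lap N g x := by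
  rw [lap_eq hf, lap_eq hg, lap_eq (hf.add hg), ← Finset.sum_add_distrib]
  refine Finset.sum_congr rfl fun i _ => ?_
  have h1 : pd N i (fun y => f y + g y) =ᶠ[nhds x] fun y => pd N i f y + pd N i g y := by
    filter_upwards [c2_ev hf, c2_ev hg] with y h1 h2
    exact pd_add h1 h2
  rw [pd_congr h1, pd_add ((hf.pd1 i).differentiableAt (by simp))
    ((hg.pd1 i).differentiableAt (by simp))]

lemma lap_congr {N : ℕ} {f g : Euc N → ℝ} {x : Euc N} (h : f =ᶠ[nhds x] g) :
    lap N f x = lap N g x := by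
  unfold lap
  rw [(h.iteratedFDeriv ℝ 2).eq_of_nhds]

lemma lap_comp {N : ℕ} {f : Euc N → ℝ} {θ : ℝ → ℝ} {x : Euc N}
    (hf : ContDiffAt ℝ 2 f x) (hθ : ContDiff ℝ 2 θ) :
    lap N (fun y => θ (f y)) x =
      deriv θ (f x) * lap N f x + deriv (deriv θ) (f x) * ∑ i, pd N i f x ^ 2 := by
  rw [lap_eq hf, lap_eq (u := fun y => θ (f y)) (hθ.contDiffAt.comp x hf), Finset.mul_sum, Finset.mul_sum,
    ← Finset.sum_add_distrib]
  refine Finset.sum_congr rfl fun i _ => ?_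
  have dθ : Differentiable ℝ θ := hθ.differentiable (by simp)
  have cθ' : ContDiff ℝ 1 (deriv θ) := (contDiff_succ_iff_deriv (n := 1)).1
    (by simpa [one_add_one_eq_two] using hθ) |>.2.2
  have dθ' : Differentiable ℝ (deriv θ) := cθ'.differentiable (by simp)
  have h1 : pd N i (fun y => θ (f y)) =ᶠ[nhds x] fun y => deriv θ (f y) * pd N i f y := by
    filter_upwards [c2_ev hf] with y h1
    exact pd_comp (dθ _) h1
  have df := hf.differentiableAt (by simp)
  have dpf := (hf.pd1 i).differentiableAt (by simp)
  rw [pd_congr h1, pd_mul (f := fun y => deriv θ (f y)) ((dθ' (f x)).comp x df) dpf, pd_comp (dθ' _) df]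
  ring

/-- logarithm of the norm -/
def lnorm (N : ℕ) (x : Euc N) : ℝ := Real.log ‖x‖

lemma lnorm_contDiffAt {N : ℕ} {x : Euc N} (hx : x ≠ 0) : ContDiffAt ℝ 2 (lnorm N) x := by
  unfold lnorm
  exact (contDiffAt_norm ℝ hx).log (norm_ne_zero_iff.2 hx)

lemma pd_coord {N : ℕ} (i j : Fin N) (x : Euc N) :
    pd N i (fun y => y j) x = if j = i then 1 else 0 := by
  unfold pd
  have : (fun y : Euc N => y j) = (EuclideanSpace.proj j : Euc N →L[ℝ] ℝ) := rfl
  rw [this, ContinuousLinearMap.fderiv]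
  simp

lemma pd_nsq {N : ℕ} (i : Fin N) (x : Euc N) :
    pd N i (fun y => ‖y‖ ^ 2) x = 2 * x i := by
  unfold pd
  rw [(hasStrictFDerivAt_norm_sq x).hasFDerivAt.fderiv]
  simp [EuclideanSpace.inner_single_right]

lemma pd_lnorm {N : ℕ} (i : Fin N) {x : Euc N} (hx : x ≠ 0) :
    pd N i (lnorm N) x = x i * (‖x‖ ^ 2)⁻¹ := by
  have h0 : ‖x‖ ^ 2 ≠ 0 := pow_ne_zero 2 (norm_ne_zero_iff.2 hx)
  have h : lnorm N = fun y => (fun s => Real.log s / 2) (‖y‖ ^ 2) := by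
    funext y; simp [lnorm]
  rw [h, pd_comp (θ := fun s => Real.log s / 2) (f := fun y => ‖y‖ ^ 2)
    ((Real.differentiableAt_log h0).div_const 2) (hasStrictFDerivAt_norm_sq x).differentiableAt,
    pd_nsq]
  simp; ring

lemma lap_lnorm {N : ℕ} {x : Euc N} (hx : x ≠ 0) :
    lap N (lnorm N) x = ((N : ℝ) - 2) * (‖x‖ ^ 2)⁻¹ := by
  rw [lap_eq (lnorm_contDiffAt hx)]
  have h0 : ‖x‖ ^ 2 ≠ 0 := pow_ne_zero 2 (norm_ne_zero_iff.2 hx)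
  have key : ∀ i, pd N i (pd N i (lnorm N)) x =
      (‖x‖ ^ 2)⁻¹ - 2 * (‖x‖ ^ 2)⁻¹ ^ 2 * (x i) ^ 2 := by
    intro i
    have h1 : pd N i (lnorm N) =ᶠ[nhds x] fun y => y i * (fun s => s⁻¹) (‖y‖ ^ 2) := by
      filter_upwards [isOpen_ne.mem_nhds hx] with y hy
      exact pd_lnorm i hy
    have dn : DifferentiableAt ℝ (fun y : Euc N => ‖y‖ ^ 2) x :=
      (hasStrictFDerivAt_norm_sq x).differentiableAt
    have dc : DifferentiableAt ℝ (fun y : Euc N => y i) x :=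
      (EuclideanSpace.proj i : Euc N →L[ℝ] ℝ).differentiableAt
    have di : DifferentiableAt ℝ (fun s : ℝ => s⁻¹) (‖x‖ ^ 2) := differentiableAt_inv h0
    rw [pd_congr h1, pd_mul (g := fun y => (fun s => s⁻¹) (‖y‖ ^ 2)) dc (di.comp x dn),
      pd_comp (θ := fun s => s⁻¹) (f := fun y => ‖y‖ ^ 2) di dn, pd_nsq, pd_coord]
    simp only [deriv_inv, if_true]
    field_simp
    ring
  simp only [key]
  rw [Finset.sum_sub_distrib, ← Finset.mul_sum, ← EuclideanSpace.real_norm_sq_eq]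
  simp
  field_simp

lemma sum_pd_lnorm_sq {N : ℕ} {x : Euc N} (hx : x ≠ 0) :
    ∑ i, pd N i (lnorm N) x ^ 2 = (‖x‖ ^ 2)⁻¹ := by
  have h0 : ‖x‖ ^ 2 ≠ 0 := pow_ne_zero 2 (norm_ne_zero_iff.2 hx)
  simp only [pd_lnorm _ hx, mul_pow]
  rw [← Finset.sum_mul, ← EuclideanSpace.real_norm_sq_eq]
  field_simp

/-- 0-homogeneous extension -/
def ext0 (N : ℕ) (φ : Euc N → ℝ) (x : Euc N) : ℝ := φ (‖x‖⁻¹ • x)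

lemma fderiv_apply_sum {N : ℕ} (f : Euc N → ℝ) (x y : Euc N) :
    fderiv ℝ f x y = ∑ i, y i * pd N i f x := by
  have : y = ∑ i, y i • (EuclideanSpace.single i (1:ℝ) : Euc N) := by
    ext j; simp [Pi.single_apply]
  conv_lhs => rw [this]
  simp [pd]

lemma ext0_smul {N : ℕ} (φ : Euc N → ℝ) (x : Euc N) {c : ℝ} (hc : 0 < c) :
    ext0 N φ (c • x) = ext0 N φ x := by
  unfold ext0
  rw [norm_smul, Real.norm_of_nonneg hc.le, smul_smul]
  congr 2
  field_simp

lemma euler0 {N : ℕ} {φ : Euc N → ℝ} {x : Euc N} (h : DifferentiableAt ℝ (ext0 N φ) x) :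
    ∑ i, x i * pd N i (ext0 N φ) x = 0 := by
  rw [← fderiv_apply_sum]
  have h1 : HasDerivAt (fun s : ℝ => ext0 N φ (s • x)) (fderiv ℝ (ext0 N φ) x x) 1 := by
    have h2 : HasDerivAt (fun s : ℝ => s • x) x 1 := by
      simpa using (hasDerivAt_id (1:ℝ)).smul_const x
    have h3 : HasFDerivAt (ext0 N φ) (fderiv ℝ (ext0 N φ) x) ((1:ℝ) • x) := by
      simpa using h.hasFDerivAt
    exact HasFDerivAt.comp_hasDerivAt (l := ext0 N φ) (f := fun s : ℝ => s • x) 1 h3 h2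
  have h4 : HasDerivAt (fun s : ℝ => ext0 N φ (s • x)) 0 1 := by
    refine (hasDerivAt_const (1:ℝ) (ext0 N φ x)).congr_of_eventuallyEq ?_
    filter_upwards [isOpen_Ioi.mem_nhds (show (0:ℝ) < 1 by norm_num)] with s hs
    exact ext0_smul φ x hs
  exact h1.unique h4

lemma rpow_neg_two {N : ℕ} (x : Euc N) : ‖x‖ ^ (-(2:ℝ)) = (‖x‖ ^ 2)⁻¹ := by
  rw [Real.rpow_neg (norm_nonneg _)]; norm_cast

lemma lap_sep {N : ℕ} {φ : Euc N → ℝ} {x : Euc N} {lam1 : ℝ} (hx : x ≠ 0)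
    (hΦ : ContDiffAt ℝ 2 (ext0 N φ) x)
    (hl : lap N (ext0 N φ) x = -lam1 * (‖x‖ ^ 2)⁻¹ * ext0 N φ x)
    {h Θ : ℝ → ℝ} (hh : ContDiff ℝ 2 h) (hΘ : ContDiff ℝ 2 Θ) :
    lap N (fun y => h (lnorm N y) * Θ (ext0 N φ y)) x =
      (‖x‖ ^ 2)⁻¹ * ((deriv (deriv h) (lnorm N x) + (N - 2) * deriv h (lnorm N x)) * Θ (ext0 N φ x)
        - lam1 * h (lnorm N x) * (ext0 N φ x * deriv Θ (ext0 N φ x)))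
      + h (lnorm N x) * deriv (deriv Θ) (ext0 N φ x) * ∑ i, pd N i (ext0 N φ) x ^ 2 := by
  have hL := lnorm_contDiffAt hx
  rw [lap_mul (f := fun y => h (lnorm N y)) (g := fun y => Θ (ext0 N φ y))
    (hh.contDiffAt.comp x hL) (hΘ.contDiffAt.comp x hΦ), lap_comp hL hh,
    lap_comp hΦ hΘ, lap_lnorm hx, sum_pd_lnorm_sq hx, hl]
  have hc : ∑ i, pd N i (fun y => h (lnorm N y)) x * pd N i (fun y => Θ (ext0 N φ y)) x = 0 := by
    have e := euler0 (hΦ.differentiableAt (by simp))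
    calc _ = ∑ i, (deriv h (lnorm N x) * (‖x‖ ^ 2)⁻¹ * deriv Θ (ext0 N φ x)) *
            (x i * pd N i (ext0 N φ) x) := by
          refine Finset.sum_congr rfl fun i _ => ?_
          rw [pd_comp (hh.differentiable (by simp) _) (hL.differentiableAt (by simp)),
            pd_comp (hΘ.differentiable (by simp) _) (hΦ.differentiableAt (by simp)),
            pd_lnorm i hx]
          ring
      _ = 0 := by rw [← Finset.mul_sum, e, mul_zero]
  rw [hc]
  ring

/-- Harmonic-type truncation of a supersolution. -/
lemma lap_trunc {N : ℕ} {Z u : Euc N → ℝ} {x : Euc N} {k : ℝ}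
    (hZ : ContDiffAt ℝ 2 Z x) (hu : ContDiffAt ℝ 2 u x)
    (pZ : 0 < Z x) (pu : 0 < u x)
    (lZ : lap N Z x + k * Z x ≤ 0) (lu : lap N u x + k * u x ≤ 0) :
    lap N (fun y => Z y * u y / (Z y + u y)) x + k * (Z x * u x / (Z x + u x)) ≤ 0 := by
  set v : Euc N → ℝ := fun y => Z y * u y / (Z y + u y) with hv
  have pS : 0 < Z x + u x := by positivity
  have cS : ContDiffAt ℝ 2 (fun y => Z y + u y) x := hZ.add hu
  have cv : ContDiffAt ℝ 2 v x := (hZ.mul hu).div cS pS.ne'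
  have ev : (fun y => v y * (Z y + u y)) =ᶠ[nhds x] fun y => Z y * u y := by
    filter_upwards [cS.continuousAt.eventually (lt_mem_nhds pS)] with y hy
    simp only [hv]
    exact div_mul_cancel₀ _ (ne_of_gt hy)
  have dZ := hZ.differentiableAt (by simp)
  have du := hu.differentiableAt (by simp)
  have dv := cv.differentiableAt (by simp)
  have dS := cS.differentiableAt (by simp)
  have e1 := lap_congr ev
  rw [lap_mul cv cS, lap_mul hZ hu, lap_add hZ hu] at e1
  have e2 : ∀ i, pd N i v x * (Z x + u x) + v x * (pd N i Z x + pd N i u x) =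
      Z x * pd N i u x + u x * pd N i Z x := by
    intro i
    have := pd_congr (i := i) ev
    rw [pd_mul dv dS, pd_mul dZ du, pd_add dZ du] at this
    linarith
  have vx : v x * (Z x + u x) = Z x * u x := div_mul_cancel₀ _ pS.ne'
  have e3 : ∑ i, pd N i Z x * pd N i u x ≤
      ∑ i, pd N i v x * pd N i (fun y => Z y + u y) x := by
    refine Finset.sum_le_sum fun i _ => ?_
    rw [pd_add dZ du]
    have h := e2 i
    set a := pd N i Z x
    set b := pd N i u x
    set c := pd N i v x
    have hc : c * (Z x + u x) ^ 2 = Z x ^ 2 * b + u x ^ 2 * a := by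
      have : c * (Z x + u x) ^ 2 = (Z x * b + u x * a) * (Z x + u x)
          - (v x * (Z x + u x)) * (a + b) := by rw [← h]; ring
      rw [this, vx]; ring
    have : 0 ≤ (c * (a + b) - a * b) * (Z x + u x) ^ 2 := by
      have : (c * (a + b) - a * b) * (Z x + u x) ^ 2 = (Z x * b - u x * a) ^ 2 := by
        have : (c * (a + b) - a * b) * (Z x + u x) ^ 2
          = (c * (Z x + u x) ^ 2) * (a + b) - a * b * (Z x + u x) ^ 2 := by ring
        rw [this, hc]; ring
      rw [this]; positivity
    have := nonneg_of_mul_nonneg_left this (by positivity)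
    linarith
  have hlt : (Z x + u x) * lap N v x ≤ (Z x - v x) * lap N u x + (u x - v x) * lap N Z x := by
    linarith
  have hvx : v x = Z x * u x / (Z x + u x) := rfl
  have f1 : Z x - v x = Z x ^ 2 / (Z x + u x) := by rw [hvx]; field_simp; ring
  have f2 : u x - v x = u x ^ 2 / (Z x + u x) := by rw [hvx]; field_simp; ring
  have g1 : (Z x - v x) * lap N u x ≤ (Z x - v x) * (-(k * u x)) :=
    mul_le_mul_of_nonneg_left (by linarith) (by rw [f1]; positivity)
  have g2 : (u x - v x) * lap N Z x ≤ (u x - v x) * (-(k * Z x)) :=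
    mul_le_mul_of_nonneg_left (by linarith) (by rw [f2]; positivity)
  have : (Z x + u x) * (lap N v x + k * v x) ≤ 0 := by
    have h5 : (Z x - v x) * (-(k * u x)) + (u x - v x) * (-(k * Z x))
      = -k * (Z x * u x) + (k * (v x * (Z x + u x)) - k * (Z x * u x)) := by ring
    rw [vx] at h5
    have h6 : (Z x + u x) * (k * v x) = k * (Z x * u x) := by rw [← vx]; ring
    rw [mul_add, h6]; linarith
  exact nonpos_of_mul_nonpos_right this pS


/-! ### A convex truncation -/

lemma exists_theta : ∃ θ : ℝ → ℝ, ContDiff ℝ 2 θ ∧ (∀ x ≤ 1, θ x = 0) ∧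
    (∀ x, 0 ≤ deriv (deriv θ) x) ∧ (∀ x, 0 ≤ x → 0 ≤ θ x) ∧
    ∀ x, 0 ≤ x → |θ x - x| ≤ 2 ∧ |x * deriv θ x - θ x| ≤ 2 := by
  set σ : ℝ → ℝ := fun y => Real.smoothTransition (y - 1) with hσ
  have cσ : ContDiff ℝ 2 σ := by
    have : ContDiff ℝ 2 Real.smoothTransition := Real.smoothTransition.contDiff (n := 2)
    exact this.comp (contDiff_id.sub contDiff_const)
  have mσ : Monotone σ := fun a b hab => Real.smoothTransition.monotone (by linarith)
  have σ0 : ∀ x ≤ 1, σ x = 0 := fun x hx => Real.smoothTransition.zero_of_nonpos (by linarith)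
  have σ1 : ∀ x, 2 ≤ x → σ x = 1 := fun x hx => Real.smoothTransition.one_of_one_le (by linarith)
  have σn : ∀ x, 0 ≤ σ x := fun x => Real.smoothTransition.nonneg _
  have σl : ∀ x, σ x ≤ 1 := fun x => Real.smoothTransition.le_one _
  set θ : ℝ → ℝ := fun x => ∫ y in (0:ℝ)..x, σ y with hθ
  have hd : ∀ x, HasDerivAt θ (σ x) x := fun x =>
    intervalIntegral.integral_hasDerivAt_right (cσ.continuous.intervalIntegrable _ _)
      cσ.continuous.aestronglyMeasurable.stronglyMeasurableAtFilter cσ.continuous.continuousAt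
  have hderiv : deriv θ = σ := funext fun x => (hd x).deriv
  have θd : Differentiable ℝ θ := fun x => (hd x).differentiableAt
  have ii : ∀ a b, IntervalIntegrable σ volume a b := fun a b =>
    cσ.continuous.intervalIntegrable _ _
  have le2 : ∀ x, 0 ≤ x → θ x ≤ x := by
    intro x hx
    have := intervalIntegral.integral_mono_on hx (ii 0 x) (intervalIntegrable_const (c := (1:ℝ)))
      (fun y _ => σl y)
    simpa using this
  have n0 : ∀ x, 0 ≤ x → 0 ≤ θ x := fun x hx =>
    intervalIntegral.integral_nonneg hx fun y _ => σn y
  have ge2 : ∀ x, 2 ≤ x → x - 2 ≤ θ x := by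
    intro x hx
    have h1 : θ x = (∫ y in (0:ℝ)..2, σ y) + ∫ y in (2:ℝ)..x, σ y :=
      (intervalIntegral.integral_add_adjacent_intervals (ii _ _) (ii _ _)).symm
    have h2 : ∫ y in (2:ℝ)..x, σ y = x - 2 := by
      rw [intervalIntegral.integral_congr (g := fun _ => (1:ℝ))]
      · simp
      · intro y hy
        rw [uIcc_of_le hx] at hy
        exact σ1 y hy.1
    have h3 := n0 2 (by norm_num)
    simp only [hθ] at h1 h3 ⊢
    linarith
  refine ⟨θ, ?_, ?_, ?_, n0, ?_⟩
  · have : ContDiff ℝ (1 + 1) θ := by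
      rw [contDiff_succ_iff_deriv]
      refine ⟨θd, by simp, ?_⟩
      rw [hderiv]
      exact cσ.of_le (by norm_num)
    simpa [one_add_one_eq_two] using this
  · intro x hx
    simp only [hθ]
    rw [intervalIntegral.integral_congr (g := fun _ => (0:ℝ))]
    · simp
    · intro y hy
      apply σ0
      have := hy.2
      exact this.trans (by simp [hx])
  · rw [hderiv]
    intro x
    exact mσ.deriv_nonneg
  · intro x hx
    rw [hderiv]
    have a1 := le2 x hx
    have a2 := n0 x hx
    have a3 := σn x
    have a4 := σl x
    rcases le_total x 2 with h | h
    · constructor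
      · rw [abs_le]; constructor <;> linarith
      · have : x * σ x ≤ x * 1 := mul_le_mul_of_nonneg_left a4 hx
        have : 0 ≤ x * σ x := by positivity
        rw [abs_le]; constructor <;> linarith
    · have a5 := ge2 x h
      rw [σ1 x h, mul_one]
      constructor <;> · rw [abs_le]; constructor <;> linarith

lemma exists_Theta (s : ℝ) (hs : 0 < s) : ∃ θ : ℝ → ℝ, ContDiff ℝ 2 θ ∧ (∀ x ≤ s, θ x = 0) ∧
    (∀ x, 0 ≤ deriv (deriv θ) x) ∧ (∀ x, 0 ≤ x → 0 ≤ θ x) ∧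
    ∀ x, 0 ≤ x → |θ x - x| ≤ 2 * s ∧ |x * deriv θ x - θ x| ≤ 2 * s := by
  obtain ⟨θ, h1, h2, h3, h4, h5⟩ := exists_theta
  have d1 : Differentiable ℝ θ := h1.differentiable (by simp)
  have c1 : ContDiff ℝ 1 (deriv θ) := (contDiff_succ_iff_deriv (n := 1)).1
    (by simpa [one_add_one_eq_two] using h1) |>.2.2
  have d2 : Differentiable ℝ (deriv θ) := c1.differentiable (by simp)
  have hl : ∀ x, HasDerivAt (fun y : ℝ => y / s) (1 / s) x := fun x =>
    (hasDerivAt_id x).div_const s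
  have e1 : deriv (fun x => s * θ (x / s)) = fun x => deriv θ (x / s) := by
    funext x
    have := ((d1 (x / s)).hasDerivAt.comp x (hl x)).const_mul s
    refine this.deriv.trans ?_
    field_simp
  have e2 : deriv (fun x => deriv θ (x / s)) = fun x => deriv (deriv θ) (x / s) * (1 / s) := by
    funext x
    exact ((d2 (x / s)).hasDerivAt.comp x (hl x)).deriv
  refine ⟨fun x => s * θ (x / s), ?_, ?_, ?_, ?_, ?_⟩
  · exact contDiff_const.mul (h1.comp (contDiff_id.div_const s))
  · intro x hx
    simp [h2 (x / s) ((div_le_one hs).2 hx)]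
  · rw [e1, e2]
    intro x
    have := h3 (x / s)
    positivity
  · intro x hx
    have := h4 (x / s) (by positivity)
    positivity
  · intro x hx
    rw [e1]
    obtain ⟨a, b⟩ := h5 (x / s) (by positivity)
    constructor
    · have : s * θ (x / s) - x = s * (θ (x / s) - x / s) := by field_simp
      simp only [this, abs_mul, abs_of_pos hs]
      nlinarith
    · have : x * deriv θ (x / s) - s * θ (x / s) = s * (x / s * deriv θ (x / s) - θ (x / s)) := by
        field_simp
      simp only [this, abs_mul, abs_of_pos hs]
      nlinarith

/-! ### Geometry of the cone -/

lemma normalize_contOn {N : ℕ} : ContinuousOn (fun x : Euc N => ‖x‖⁻¹ • x) {x | x ≠ 0} := by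
  intro x hx
  exact ((continuousAt_id.norm.inv₀ (norm_ne_zero_iff.2 hx)).smul continuousAt_id).continuousWithinAt

lemma normalize_sphere {N : ℕ} {x : Euc N} (hx : x ≠ 0) :
    ‖x‖⁻¹ • x ∈ Metric.sphere (0 : Euc N) 1 := by
  simp [norm_smul, hx]

lemma cone_isOpen {N : ℕ} {Ω : Set (Euc N)} (hΩ : IsConeDomain N Ω) : IsOpen (cone N Ω) := by
  obtain ⟨O, hO, hO'⟩ := isOpen_induced_iff.1 hΩ.2.2
  have h : cone N Ω = {x | x ≠ 0} ∩ (fun x : Euc N => ‖x‖⁻¹ • x) ⁻¹' O := by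
    ext x
    constructor
    · rintro ⟨h1, h2⟩
      refine ⟨h1, ?_⟩
      have : (⟨_, normalize_sphere h1⟩ : Metric.sphere (0 : Euc N) 1) ∈ Subtype.val ⁻¹' O := by
        rw [hO']; exact h2
      exact this
    · rintro ⟨h1, h2⟩
      refine ⟨h1, ?_⟩
      have : (⟨_, normalize_sphere h1⟩ : Metric.sphere (0 : Euc N) 1) ∈ Subtype.val ⁻¹' O := h2
      rw [hO'] at this
      exact this
  rw [h]
  exact normalize_contOn.isOpen_inter_preimage isOpen_ne hO

lemma coneGT_sub {N : ℕ} {Ω : Set (Euc N)} {ρ : ℝ} (hρ : 0 < ρ) : coneGT N ρ Ω ⊆ cone N Ω :=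
  fun _ hx => ⟨norm_pos_iff.1 (hρ.trans hx.1), hx.2⟩

lemma coneGT_isOpen {N : ℕ} {Ω : Set (Euc N)} (hΩ : IsConeDomain N Ω) {ρ : ℝ} (hρ : 0 < ρ) :
    IsOpen (coneGT N ρ Ω) := by
  have : coneGT N ρ Ω = {x | ρ < ‖x‖} ∩ cone N Ω := by
    ext x
    exact ⟨fun h => ⟨h.1, coneGT_sub hρ h⟩, fun h => ⟨h.1, h.2.2⟩⟩
  rw [this]
  exact (isOpen_lt continuous_const continuous_norm).inter (cone_isOpen hΩ)

lemma closure_coneGT {N : ℕ} {Ω : Set (Euc N)} {ρ : ℝ} (hρ : 0 < ρ) :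
    ∀ x ∈ closure (coneGT N ρ Ω), ρ ≤ ‖x‖ ∧ ‖x‖⁻¹ • x ∈ closure Ω := by
  intro x hx
  have h1 : ρ ≤ ‖x‖ := by
    have : closure (coneGT N ρ Ω) ⊆ {x | ρ ≤ ‖x‖} :=
      closure_minimal (fun y hy => hy.1.le) (isClosed_le continuous_const continuous_norm)
    exact this hx
  refine ⟨h1, ?_⟩
  have hx0 : x ≠ 0 := norm_pos_iff.1 (hρ.trans_le h1)
  have hc : ContinuousAt (fun x : Euc N => ‖x‖⁻¹ • x) x :=
    normalize_contOn.continuousAt (isOpen_ne.mem_nhds hx0)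
  exact (hc.continuousWithinAt (s := coneGT N ρ Ω)).mem_closure hx (fun y hy => hy.2)

section eig
variable {N : ℕ} {Ω : Set (Euc N)} {lam1 : ℝ} {φ : Euc N → ℝ}

lemma ext0_cd (hΩ : IsConeDomain N Ω) (h : DirichletEigenpair N Ω lam1 φ) {x : Euc N}
    (hx : x ∈ cone N Ω) : ContDiffAt ℝ 2 (ext0 N φ) x :=
  h.smoothExt.contDiffAt ((cone_isOpen hΩ).mem_nhds hx)

lemma ext0_lap (h : DirichletEigenpair N Ω lam1 φ) {x : Euc N} (hx : x ∈ cone N Ω) :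
    lap N (ext0 N φ) x = -lam1 * (‖x‖ ^ 2)⁻¹ * ext0 N φ x := by
  rw [← rpow_neg_two]; exact h.eigen x hx

lemma ext0_pos (h : DirichletEigenpair N Ω lam1 φ) {x : Euc N} (hx : x ∈ cone N Ω) :
    0 < ext0 N φ x := h.pos _ hx.2

lemma ext0_le (h : DirichletEigenpair N Ω lam1 φ) {x : Euc N} (hx : x ∈ cone N Ω) :
    ext0 N φ x ≤ 1 := h.le_one _ (subset_closure hx.2)

/-- compact sub-cone -/
def Kset (N : ℕ) (Ω : Set (Euc N)) (φ : Euc N → ℝ) (a b s : ℝ) : Set (Euc N) :=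
  (fun p : ℝ × Euc N => p.1 • p.2) '' (Icc (exp a) (exp b) ×ˢ {ω | ω ∈ closure Ω ∧ s ≤ φ ω})

lemma Kset_compact (hΩ : IsConeDomain N Ω) (h : DirichletEigenpair N Ω lam1 φ) (a b s : ℝ) :
    IsCompact (Kset N Ω φ a b s) := by
  have hcl : closure Ω ⊆ Metric.sphere (0 : Euc N) 1 :=
    closure_minimal hΩ.1 Metric.isClosed_sphere
  have hcc : IsCompact (closure Ω) :=
    (isCompact_sphere (0 : Euc N) 1).of_isClosed_subset isClosed_closure hcl
  refine (isCompact_Icc.prod ?_).image (by fun_prop)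
  have : IsClosed (closure Ω ∩ φ ⁻¹' (Ici s)) :=
    h.contOn.preimage_isClosed_of_isClosed isClosed_closure isClosed_Ici
  exact hcc.of_isClosed_subset this inter_subset_left

lemma Kset_sub (hΩ : IsConeDomain N Ω) (h : DirichletEigenpair N Ω lam1 φ) {a b s ρ : ℝ}
    (hs : 0 < s) (hρ : 0 < ρ) (ha : Real.log ρ < a) : Kset N Ω φ a b s ⊆ coneGT N ρ Ω := by
  rintro _ ⟨⟨r, ω⟩, ⟨hr, hω, hsω⟩, rfl⟩
  have hωΩ : ω ∈ Ω := by
    by_contra hcon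
    have := h.bdryZero ω ⟨hω, hcon⟩
    simp only at hsω
    linarith
  have hr0 : 0 < r := (exp_pos a).trans_le hr.1
  have hn : ‖r • ω‖ = r := by
    have : ‖ω‖ = 1 := by simpa using hΩ.1 hωΩ
    rw [norm_smul, this, Real.norm_of_nonneg hr0.le, mul_one]
  refine ⟨?_, ?_⟩
  · simp only [hn]
    have : exp (Real.log ρ) < exp a := exp_lt_exp.2 ha
    rw [exp_log hρ] at this
    exact this.trans_le hr.1
  · simp only [hn, smul_smul, inv_mul_cancel₀ hr0.ne', one_smul]
    exact hωΩ

lemma mem_Kset {a b s : ℝ} {x : Euc N} (hx : x ∈ cone N Ω) (ha : a ≤ lnorm N x)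
    (hb : lnorm N x ≤ b) (hs : s ≤ ext0 N φ x) : x ∈ Kset N Ω φ a b s := by
  have hp : 0 < ‖x‖ := norm_pos_iff.2 hx.1
  refine ⟨(‖x‖, ‖x‖⁻¹ • x), ⟨⟨?_, ?_⟩, subset_closure hx.2, hs⟩, ?_⟩
  · rw [← exp_log hp]; exact exp_le_exp.2 ha
  · show ‖x‖ ≤ exp b
    rw [← exp_log hp]; exact exp_le_exp.2 hb
  · simp [smul_smul, hp.ne']

end eig

/-! ### Green's identity -/

lemma green {N : ℕ} {U : Set (Euc N)} (hU : IsOpen U) {v ζ : Euc N → ℝ}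
    (hv : ContDiffOn ℝ 2 v U) {K : Set (Euc N)} (hK : IsCompact K) (hKU : K ⊆ U)
    (hζ : ContDiffOn ℝ 2 ζ U) (hζK : ∀ x, x ∉ K → ζ x = 0) :
    ∃ Y : Euc N → ℝ, Integrable Y ∧ ∫ x, Y x = 0 ∧
      (∀ x ∈ U, Y x = ζ x * lap N v x - v x * lap N ζ x) ∧ ∀ x, x ∉ U → Y x = 0 := by
  have hKc : IsClosed K := hK.isClosed
  set X : Fin N → Euc N → ℝ := fun i x => ζ x * pd N i v x - v x * pd N i ζ x with hX
  have hvx : ∀ x ∈ U, ContDiffAt ℝ 2 v x := fun x hx => hv.contDiffAt (hU.mem_nhds hx)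
  have hζx : ∀ x ∈ U, ContDiffAt ℝ 2 ζ x := fun x hx => hζ.contDiffAt (hU.mem_nhds hx)
  have ζev : ∀ x, x ∉ K → ζ =ᶠ[nhds x] fun _ => 0 := fun x hx => by
    filter_upwards [hKc.isOpen_compl.mem_nhds hx] with y hy
    exact hζK y hy
  have Xz : ∀ i x, x ∉ K → X i x = 0 := by
    intro i x hx
    have : pd N i ζ x = 0 := by rw [pd_congr (ζev x hx)]; simp [pd]
    simp [hX, hζK x hx, this]
  have Xev : ∀ i x, x ∉ K → X i =ᶠ[nhds x] fun _ => 0 := fun i x hx => by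
    filter_upwards [hKc.isOpen_compl.mem_nhds hx] with y hy
    exact Xz i y hy
  have Xc : ∀ i, ContDiff ℝ 1 (X i) := by
    intro i
    rw [contDiff_iff_contDiffAt]
    intro x
    by_cases hx : x ∈ K
    · have hx := hKU hx
      exact (((hζx x hx).of_le (by norm_num)).mul ((hvx x hx).pd1 i)).sub
        (((hvx x hx).of_le (by norm_num)).mul ((hζx x hx).pd1 i))
    · exact contDiffAt_const.congr_of_eventuallyEq (Xev i x hx)
  have Xs : ∀ i, HasCompactSupport (X i) := fun i => HasCompactSupport.intro hK (Xz i)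
  have pXc : ∀ i, Continuous (pd N i (X i)) := fun i =>
    ((Xc i).continuous_fderiv (by simp)).clm_apply continuous_const
  have pXs : ∀ i, HasCompactSupport (pd N i (X i)) := fun i =>
    (Xs i).fderiv_apply (𝕜 := ℝ) _
  have pXi : ∀ i, Integrable (pd N i (X i)) := fun i => (pXc i).integrable_of_hasCompactSupport (pXs i)
  have Xi : ∀ i, Integrable (X i) := fun i => (Xc i).continuous.integrable_of_hasCompactSupport (Xs i)
  have p0 : ∀ i, ∫ x, pd N i (X i) x = 0 := by
    intro i
    have := integral_mul_fderiv_eq_neg_fderiv_mul_of_integrable (μ := volume)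
      (f := fun _ : Euc N => (1:ℝ)) (g := X i) (v := EuclideanSpace.single i 1)
      (by simp) (by simp only [one_mul]; exact pXi i) (by simp only [one_mul]; exact Xi i)
      (by fun_prop)
      (fun x _ => (Xc i).differentiable (by simp) x)
    simpa [pd] using this
  refine ⟨fun x => ∑ i, pd N i (X i) x, integrable_finsetSum _ fun i _ => pXi i, ?_, ?_, ?_⟩
  · rw [integral_finsetSum _ fun i _ => pXi i]
    simp [p0]
  · intro x hx
    rw [lap_eq (hvx x hx), lap_eq (hζx x hx), Finset.mul_sum, Finset.mul_sum,
      ← Finset.sum_sub_distrib]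
    refine Finset.sum_congr rfl fun i _ => ?_
    have dv := (hvx x hx).differentiableAt (by simp)
    have dζ := (hζx x hx).differentiableAt (by simp)
    have dpv := ((hvx x hx).pd1 i).differentiableAt (by simp)
    have dpζ := ((hζx x hx).pd1 i).differentiableAt (by simp)
    simp only [hX]
    rw [pd_sub (f := fun y => ζ y * pd N i v y) (g := fun y => v y * pd N i ζ y)
      (dζ.mul dpv) (dv.mul dpζ), pd_mul dζ dpv, pd_mul dv dpζ]
    ring
  · intro x hx
    have hxK : x ∉ K := fun h => hx (hKU h)
    refine Finset.sum_eq_zero fun i _ => ?_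
    rw [pd_congr (Xev i x hxK)]; simp [pd]


/-! ### Existence -/

lemma gamma_facts {N : ℕ} {lam1 μ : ℝ} (hμ : μ ≤ CHconst N lam1) :
    ∃ A : ℝ, 0 ≤ A ∧ 2 * gammaStar N lam1 μ + ((N:ℝ) - 2) = -A ∧
      gammaStar N lam1 μ ^ 2 + ((N:ℝ) - 2) * gammaStar N lam1 μ = lam1 - μ := by
  unfold CHconst at hμ
  have h0 : 0 ≤ ((N : ℝ) - 2) ^ 2 + 4 * (lam1 - μ) := by nlinarith
  refine ⟨Real.sqrt (((N : ℝ) - 2) ^ 2 + 4 * (lam1 - μ)), Real.sqrt_nonneg _, ?_, ?_⟩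
  · unfold gammaStar; ring
  · have := Real.sq_sqrt h0
    unfold gammaStar
    nlinarith

lemma norm_eq_exp {N : ℕ} {x : Euc N} (hx : x ≠ 0) : ‖x‖ = exp (lnorm N x) :=
  (exp_log (norm_pos_iff.2 hx)).symm

lemma nsq_inv {N : ℕ} {x : Euc N} (hx : x ≠ 0) : (‖x‖ ^ 2)⁻¹ = exp (-2 * lnorm N x) := by
  rw [norm_eq_exp hx, ← Real.exp_nat_mul, ← Real.exp_neg]; push_cast; ring_nf

lemma lnorm_gt {N : ℕ} {Ω : Set (Euc N)} {ρ : ℝ} (hρ : 0 < ρ) {x : Euc N}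
    (hx : x ∈ coneGT N ρ Ω) : Real.log ρ < lnorm N x := Real.log_lt_log hρ hx.1

lemma hasDeriv_cexp (a c t : ℝ) : HasDerivAt (fun t => c * exp (a * t)) (c * a * exp (a * t)) t := by
  have := (((hasDerivAt_id t).const_mul a).exp).const_mul c
  refine this.congr_deriv ?_
  simp; ring

lemma lnorm_contOn {N : ℕ} : ContinuousOn (lnorm N) {x | x ≠ 0} := fun _ hx =>
  (lnorm_contDiffAt hx).continuousAt.continuousWithinAt

lemma lint_fin {N : ℕ} {Ω : Set (Euc N)} (hΩ : IsConeDomain N Ω) {ρ a : ℝ} (hρ : 0 < ρ)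
    (ha : (N:ℝ) < a) :
    (∫⁻ y in coneGT N ρ Ω, ENNReal.ofReal (exp (-a * lnorm N y))) < ⊤ := by
  have hm : MeasurableSet (coneGT N ρ Ω) := (coneGT_isOpen hΩ hρ).measurableSet
  have hi : Integrable (fun x : Euc N => (1 + ‖x‖) ^ (-a)) :=
    integrable_one_add_norm (by simpa using ha)
  set c0 := ρ / (1 + ρ) with hc0
  have hc0p : 0 < c0 := by positivity
  have hi2 : Integrable (fun x : Euc N => c0 ^ (-a) * (1 + ‖x‖) ^ (-a)) := hi.const_mul _
  have hf := hi2.lintegral_lt_top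
  refine lt_of_le_of_lt ?_ hf
  refine le_trans ?_ (setLIntegral_le_lintegral (coneGT N ρ Ω) _)
  refine setLIntegral_mono' hm fun x hx => ENNReal.ofReal_le_ofReal ?_
  have hx0 : x ≠ 0 := (coneGT_sub hρ hx).1
  have hp : 0 < ‖x‖ := norm_pos_iff.2 hx0
  have e : exp (-a * lnorm N x) = ‖x‖ ^ (-a) := by
    rw [Real.rpow_def_of_pos hp, mul_comm]; rfl
  rw [e, ← Real.mul_rpow hc0p.le (by positivity)]
  refine Real.rpow_le_rpow_of_nonpos (by positivity) ?_ ?_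
  · rw [hc0, div_mul_eq_mul_div, div_le_iff₀ (by positivity)]
    have := hx.1
    nlinarith
  · have : (0:ℝ) ≤ N := Nat.cast_nonneg N
    linarith

lemma exists_sol {N : ℕ} (hN : 2 ≤ N) {Ω : Set (Euc N)} (hΩ : IsConeDomain N Ω)
    {lam1 : ℝ} {φ : Euc N → ℝ} (hphi : DirichletEigenpair N Ω lam1 φ)
    {p q ρ μ : ℝ} (hp : 0 < p) (hρ : 0 < ρ) (hμ : μ ≤ CHconst N lam1)
    (hq : 2 < (q - 1) * (-(gammaStar N lam1 μ)))
    (hpN : (N : ℝ) < p * (-(gammaStar N lam1 μ))) :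
    ∃ u : Euc N → ℝ, IsPosSolZ N ρ μ p q Ω u := by
  obtain ⟨A, hA, hA1, hA2⟩ := gamma_facts hμ
  set γ := gammaStar N lam1 μ with hγ
  have hN0 : (2:ℝ) ≤ N := by exact_mod_cast hN
  have hγ0 : γ < 0 := by
    by_contra hcon
    push Not at hcon
    nlinarith
  have hq1 : 1 < q := by
    by_contra hcon
    push Not at hcon
    nlinarith
  set ε := (q - 1) * (-γ) - 2 with hε
  have hε0 : 0 < ε := by linarith
  set K := exp (ε * Real.log ρ) / 2 with hK
  have hK0 : 0 < K := by positivity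
  set κ := K * (ε * (ε + A)) with hκ
  have hκ0 : 0 < κ := by positivity
  set I1 := ∫⁻ y in coneGT N ρ Ω, ENNReal.ofReal (exp (-(p * (-γ)) * lnorm N y)) with hI1
  have hI1f : I1 < ⊤ := lint_fin hΩ hρ hpN
  set B := I1.toReal with hB
  have hB0 : 0 ≤ B := ENNReal.toReal_nonneg
  have hpq : 0 < p + q - 1 := by linarith
  set c := (κ / (B + 1)) ^ (1 / (p + q - 1)) with hc
  have hc0 : 0 < c := by positivity
  have hcp : c ^ (p + q - 1) * B ≤ κ := by
    rw [hc, ← Real.rpow_mul (by positivity), one_div, inv_mul_cancel₀ hpq.ne', Real.rpow_one,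
      div_mul_eq_mul_div, div_le_iff₀ (by positivity)]
    nlinarith
  set h : ℝ → ℝ := fun t => c * exp (γ * t) - c * K * exp ((γ - ε) * t) with hh
  have hhc : ContDiff ℝ 2 h := by rw [hh]; fun_prop
  have hd1 : deriv h = fun t => c * γ * exp (γ * t) - c * K * (γ - ε) * exp ((γ - ε) * t) := by
    funext t
    exact ((hasDeriv_cexp γ c t).sub (hasDeriv_cexp (γ - ε) (c * K) t)).deriv
  have hd2 : deriv (deriv h) = fun t => c * γ * γ * exp (γ * t)
      - c * K * (γ - ε) * (γ - ε) * exp ((γ - ε) * t) := by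
    rw [hd1]
    funext t
    exact ((hasDeriv_cexp γ (c * γ) t).sub (hasDeriv_cexp (γ - ε) (c * K * (γ - ε)) t)).deriv
  have hle : ∀ t, h t ≤ c * exp (γ * t) := by
    intro t
    have : 0 < c * K * exp ((γ - ε) * t) := by positivity
    simp only [hh]; linarith
  have hpos : ∀ t, Real.log ρ < t → 0 < h t := by
    intro t ht
    have e1 : h t = c * exp (γ * t) * (1 - K * exp (-ε * t)) := by
      simp only [hh]
      rw [show (γ - ε) * t = γ * t + -ε * t by ring, Real.exp_add]; ring
    have e2 : K * exp (-ε * t) ≤ 1 / 2 := by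
      rw [hK, div_mul_eq_mul_div, ← Real.exp_add]
      have : exp (ε * Real.log ρ + -ε * t) ≤ 1 := by
        rw [Real.exp_le_one_iff]; nlinarith
      linarith
    rw [e1]
    have : 0 < 1 - K * exp (-ε * t) := by linarith
    positivity
  set u : Euc N → ℝ := fun x => h (lnorm N x) * (fun s => s) (ext0 N φ x) with hu
  have hU : IsOpen (coneGT N ρ Ω) := coneGT_isOpen hΩ hρ
  have hmU : MeasurableSet (coneGT N ρ Ω) := hU.measurableSet
  have hupos : ∀ x ∈ coneGT N ρ Ω, 0 < u x := fun x hx =>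
    mul_pos (hpos _ (lnorm_gt hρ hx)) (ext0_pos hphi (coneGT_sub hρ hx))
  have hule : ∀ x ∈ coneGT N ρ Ω, u x ≤ c * exp (γ * lnorm N x) * ext0 N φ x := fun x hx =>
    mul_le_mul_of_nonneg_right (hle _) (ext0_pos hphi (coneGT_sub hρ hx)).le
  have hule' : ∀ x ∈ coneGT N ρ Ω, u x ≤ c * exp (γ * lnorm N x) := fun x hx =>
    (hule x hx).trans (mul_le_of_le_one_right (by positivity) (ext0_le hphi (coneGT_sub hρ hx)))
  have hInt : (∫⁻ y in coneGT N ρ Ω, ENNReal.ofReal (u y ^ p)) ≤ ENNReal.ofReal (c ^ p) * I1 := by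
    rw [hI1, ← lintegral_const_mul' _ _ ENNReal.ofReal_ne_top]
    refine setLIntegral_mono' hmU fun x hx => ?_
    rw [← ENNReal.ofReal_mul (by positivity)]
    refine ENNReal.ofReal_le_ofReal ?_
    calc u x ^ p ≤ (c * exp (γ * lnorm N x)) ^ p :=
          Real.rpow_le_rpow (hupos x hx).le (hule' x hx) hp.le
      _ = _ := by
          rw [Real.mul_rpow hc0.le (exp_pos _).le, ← Real.exp_mul]
          ring_nf
  have hfin : ENNReal.ofReal (c ^ p) * I1 < ⊤ := ENNReal.mul_lt_top ENNReal.ofReal_lt_top hI1f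
  have hIntR : (∫⁻ y in coneGT N ρ Ω, ENNReal.ofReal (u y ^ p)).toReal ≤ c ^ p * B := by
    refine (ENNReal.toReal_mono hfin.ne hInt).trans_eq ?_
    rw [ENNReal.toReal_mul, ENNReal.toReal_ofReal (by positivity)]
  refine ⟨u, ?_, ?_, hupos, lt_of_le_of_lt hInt hfin, ?_⟩
  · intro x hx
    have hxc := coneGT_sub hρ hx
    exact ((hhc.contDiffAt.comp x (lnorm_contDiffAt hxc.1)).mul
      (ext0_cd hΩ hphi hxc)).contDiffWithinAt
  · have hcl := closure_coneGT (N := N) (Ω := Ω) hρ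
    have hne : ∀ x ∈ closure (coneGT N ρ Ω), x ∈ {x : Euc N | x ≠ 0} := fun x hx =>
      norm_pos_iff.1 (hρ.trans_le (hcl x hx).1)
    refine ContinuousOn.mul ?_ ?_
    · exact hhc.continuous.comp_continuousOn (lnorm_contOn.mono hne)
    · exact hphi.contOn.comp (normalize_contOn.mono hne) (fun x hx => (hcl x hx).2)
  · intro x hx
    have hxc := coneGT_sub hρ hx
    have hΦ := ext0_pos hphi hxc
    have hΦ1 := ext0_le hphi hxc
    have hlap := lap_sep hxc.1 (ext0_cd hΩ hphi hxc) (ext0_lap hphi hxc) hhc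
      (Θ := fun s => s) contDiff_id
    rw [rpow_neg_two]
    have hux : u x = h (lnorm N x) * ext0 N φ x := rfl
    rw [show lap N u x = _ from hlap]
    rw [hd2, hd1]
    simp only [deriv_id'', deriv_const', mul_one, mul_zero, zero_mul, add_zero]
    rw [hux]
    set t := lnorm N x
    set Φ := ext0 N φ x
    have hR : -((‖x‖ ^ 2)⁻¹ * ((c * γ * γ * exp (γ * t) - c * K * (γ - ε) * (γ - ε) * exp ((γ - ε) * t) +
        (↑N - 2) * (c * γ * exp (γ * t) - c * K * (γ - ε) * exp ((γ - ε) * t))) * Φ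
        - lam1 * h t * Φ)) - μ * (‖x‖ ^ 2)⁻¹ * (h t * Φ) = c * κ * exp (q * γ * t) * Φ := by
      have e1 : exp (q * γ * t) = (‖x‖ ^ 2)⁻¹ * exp ((γ - ε) * t) := by
        rw [nsq_inv hxc.1, ← Real.exp_add]
        congr 1
        simp only [hε, t]; ring
      rw [e1, hκ]
      have e2 : lam1 = μ + (γ ^ 2 + (↑N - 2) * γ) := by linarith
      have e3 : A = -(2 * γ + (↑N - 2)) := by linarith
      rw [e2, e3]
      simp only [hh]
      ring
    rw [hR]
    have hp1 : (h t * Φ) ^ q ≤ c ^ q * exp (q * γ * t) * Φ := by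
      calc (h t * Φ) ^ q ≤ (c * exp (γ * t) * Φ) ^ q :=
            Real.rpow_le_rpow (hupos x hx).le (hule x hx) (by linarith)
        _ = c ^ q * exp (q * γ * t) * Φ ^ q := by
            rw [Real.mul_rpow (by positivity) hΦ.le, Real.mul_rpow hc0.le (exp_pos _).le,
              ← Real.exp_mul]
            ring_nf
        _ ≤ c ^ q * exp (q * γ * t) * Φ := by
            refine mul_le_mul_of_nonneg_left ?_ (by positivity)
            calc Φ ^ q ≤ Φ ^ (1:ℝ) := Real.rpow_le_rpow_of_exponent_ge hΦ hΦ1 hq1.le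
              _ = Φ := Real.rpow_one _
    have hce : c ^ p * c ^ q = c * c ^ (p + q - 1) := by
      rw [← Real.rpow_add hc0]
      nth_rewrite 2 [← Real.rpow_one c]
      rw [← Real.rpow_add hc0]; ring_nf
    have hnn : 0 ≤ (h t * Φ) ^ q := Real.rpow_nonneg (hupos x hx).le _
    calc _ ≤ c ^ p * B * (c ^ q * exp (q * γ * t) * Φ) := by
          refine mul_le_mul hIntR hp1 hnn (by positivity)
      _ = c * (c ^ (p + q - 1) * B) * exp (q * γ * t) * Φ := by
          rw [show c ^ p * B * (c ^ q * exp (q * γ * t) * Φ)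
            = (c ^ p * c ^ q) * B * exp (q * γ * t) * Φ by ring, hce]; ring
      _ ≤ c * κ * exp (q * γ * t) * Φ := by gcongr


/-! ### Non-existence -/

lemma ode_mono {m m' m'' : ℝ → ℝ} {A T0 : ℝ} (hA : 0 ≤ A)
    (h1 : ∀ τ, HasDerivAt m (m' τ) τ) (h2 : ∀ τ, HasDerivAt m' (m'' τ) τ)
    (hin : ∀ τ, T0 < τ → m'' τ - A * m' τ ≤ 0) (hpos : ∀ τ, 0 ≤ m τ) :
    ∀ τ₁ τ₂, T0 < τ₁ → τ₁ ≤ τ₂ → m τ₁ ≤ m τ₂ := by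
  have key : ∀ τ, T0 < τ → 0 ≤ m' τ := by
    intro a ha
    by_contra hcon
    push Not at hcon
    have hg : ∀ τ, HasDerivAt (fun τ => exp (-A * τ) * m' τ)
        (exp (-A * τ) * (m'' τ - A * m' τ)) τ := by
      intro τ
      have := (hasDeriv_cexp (-A) 1 τ).mul (h2 τ)
      simp only [one_mul] at this
      refine this.congr_deriv ?_
      ring
    have anti : AntitoneOn (fun τ => exp (-A * τ) * m' τ) (Ici a) := by
      refine antitoneOn_of_deriv_nonpos (convex_Ici a)
        (fun τ _ => (hg τ).continuousAt.continuousWithinAt)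
        (fun τ _ => (hg τ).differentiableAt.differentiableWithinAt) ?_
      intro τ hτ
      rw [interior_Ici] at hτ
      rw [(hg τ).deriv]
      exact mul_nonpos_of_nonneg_of_nonpos (exp_pos _).le (hin τ (ha.trans hτ))
    have m'le : ∀ τ, a ≤ τ → m' τ ≤ m' a := by
      intro τ hτ
      have := anti (mem_Ici.2 le_rfl) (mem_Ici.2 hτ) hτ
      simp only at this
      have e : exp (-A * a) * m' a ≤ exp (-A * τ) * m' a := by
        refine mul_le_mul_of_nonpos_right ?_ hcon.le
        exact exp_le_exp.2 (by nlinarith)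
      exact le_of_mul_le_mul_left (this.trans e) (exp_pos _)
    have hd : ∀ τ, HasDerivAt (fun τ => m τ - m' a * τ) (m' τ - m' a) τ := by
      intro τ
      refine ((h1 τ).sub ((hasDerivAt_id τ).const_mul (m' a))).congr_deriv ?_
      simp
    have anti2 : AntitoneOn (fun τ => m τ - m' a * τ) (Ici a) := by
      refine antitoneOn_of_deriv_nonpos (convex_Ici a)
        (fun τ _ => (hd τ).continuousAt.continuousWithinAt)
        (fun τ _ => (hd τ).differentiableAt.differentiableWithinAt) ?_
      intro τ hτ
      rw [interior_Ici] at hτ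
      rw [(hd τ).deriv]
      linarith [m'le τ (le_of_lt hτ)]
    have hm0 := hpos a
    set b := a + (m a + 1) / (-m' a) with hb
    have hab : a ≤ b := by
      have : 0 ≤ (m a + 1) / (-m' a) := div_nonneg (by linarith) (by linarith)
      linarith
    have := anti2 (mem_Ici.2 le_rfl) (mem_Ici.2 hab) hab
    simp only at this
    have e : m' a * b = m' a * a - (m a + 1) := by
      have hne : m' a ≠ 0 := hcon.ne
      rw [hb]; field_simp; ring
    have := hpos b
    linarith
  intro a b ha hab
  have mono : MonotoneOn m (Ici a) := by
    refine monotoneOn_of_deriv_nonneg (convex_Ici a)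
      (fun τ _ => (h1 τ).continuousAt.continuousWithinAt)
      (fun τ _ => (h1 τ).differentiableAt.differentiableWithinAt) ?_
    intro τ hτ
    rw [interior_Ici] at hτ
    rw [(h1 τ).deriv]
    exact key τ (ha.trans hτ)
  exact mono (mem_Ici.2 le_rfl) (mem_Ici.2 hab) hab

lemma bdd_of_supp {g : ℝ → ℝ} (hg : Continuous g) (hs : ∀ t, 1 < |t| → g t = 0) :
    ∃ M, 0 ≤ M ∧ ∀ t, |g t| ≤ M := by
  have hc : HasCompactSupport g := by
    refine HasCompactSupport.intro (isCompact_Icc (a := (-1:ℝ)) (b := 1)) fun t ht => hs t ?_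
    by_contra hcon
    exact ht (abs_le.1 (not_lt.1 hcon))
  obtain ⟨M, hM⟩ := hg.bounded_above_of_compact_support hc
  exact ⟨M, (norm_nonneg _).trans (hM 0), hM⟩

section integr
variable {N : ℕ} {U : Set (Euc N)} {f : Euc N → ℝ} {C : ℝ}

lemma supp_ball {x : Euc N} (hx : x ≠ 0) {τ : ℝ} (h : |lnorm N x - τ| ≤ 1) :
    x ∈ Metric.closedBall (0 : Euc N) (exp (τ + 1)) := by
  rw [mem_closedBall_zero_iff, norm_eq_exp hx]
  exact exp_le_exp.2 (by linarith [(abs_le.1 h).2])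

lemma meas_term (hU : IsOpen U) (hU0 : ∀ x ∈ U, x ≠ 0) (hf : ContinuousOn f U)
    {g : ℝ → ℝ} (hg : Continuous g) (τ : ℝ) :
    AEStronglyMeasurable (fun x => f x * g (lnorm N x - τ)) (volume.restrict U) := by
  refine ContinuousOn.aestronglyMeasurable ?_ hU.measurableSet
  exact hf.mul (hg.comp_continuousOn ((lnorm_contOn.mono hU0).sub continuousOn_const))

lemma int_term (hU : IsOpen U) (hU0 : ∀ x ∈ U, x ≠ 0) (hf : ContinuousOn f U)
    (hC : ∀ x ∈ U, |f x| ≤ C) {g : ℝ → ℝ} (hg : Continuous g) (hs : ∀ t, 1 < |t| → g t = 0)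
    (τ : ℝ) : IntegrableOn (fun x => f x * g (lnorm N x - τ)) U := by
  obtain ⟨M, hM0, hM⟩ := bdd_of_supp hg hs
  have hb : Integrable ((Metric.closedBall (0 : Euc N) (exp (τ + 1))).indicator fun _ => C * M) :=
    (integrable_indicator_iff Metric.isClosed_closedBall.measurableSet).2
      (integrableOn_const (isCompact_closedBall _ _).measure_lt_top.ne)
  refine Integrable.mono' (hb.mono_measure Measure.restrict_le_self)
    (meas_term hU hU0 hf hg τ) ?_
  refine (ae_restrict_iff' hU.measurableSet).2 (Filter.Eventually.of_forall fun x hx => ?_)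
  by_cases h : |lnorm N x - τ| ≤ 1
  · rw [indicator_of_mem (supp_ball (hU0 x hx) h), norm_mul]
    exact mul_le_mul (hC x hx) (hM _) (norm_nonneg _) ((abs_nonneg _).trans (hC x hx))
  · rw [hs _ (not_le.1 h), mul_zero, norm_zero]
    refine indicator_nonneg (fun _ _ => mul_nonneg ((abs_nonneg _).trans (hC x hx)) hM0) _

lemma deriv_term (hU : IsOpen U) (hU0 : ∀ x ∈ U, x ≠ 0) (hf : ContinuousOn f U)
    (hC : ∀ x ∈ U, |f x| ≤ C) {g g' : ℝ → ℝ} (hg : ∀ t, HasDerivAt g (g' t) t)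
    (hg' : Continuous g') (hs : ∀ t, 1 < |t| → g t = 0) (hs' : ∀ t, 1 < |t| → g' t = 0)
    (τ : ℝ) : HasDerivAt (fun τ => ∫ x in U, f x * g (lnorm N x - τ))
      (-∫ x in U, f x * g' (lnorm N x - τ)) τ := by
  obtain ⟨M, hM0, hM⟩ := bdd_of_supp hg' hs'
  have hgc : Continuous g := continuous_iff_continuousAt.2 fun t => (hg t).continuousAt
  set bound : Euc N → ℝ :=
    (Metric.closedBall (0 : Euc N) (exp (τ + 1 + 1))).indicator fun _ => C * M with hbd
  have hb : Integrable bound :=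
    (integrable_indicator_iff Metric.isClosed_closedBall.measurableSet).2
      (integrableOn_const (isCompact_closedBall _ _).measure_lt_top.ne)
  have := hasDerivAt_integral_of_dominated_loc_of_deriv_le (μ := volume.restrict U)
    (F := fun τ x => f x * g (lnorm N x - τ)) (F' := fun τ x => -(f x * g' (lnorm N x - τ)))
    (x₀ := τ) (s := Metric.ball τ 1) (bound := bound) (Metric.ball_mem_nhds τ one_pos)
    (Filter.Eventually.of_forall fun τ => meas_term hU hU0 hf hgc τ)
    (int_term hU hU0 hf hC hgc hs τ) (meas_term hU hU0 hf hg' τ).neg ?_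
    (hb.mono_measure Measure.restrict_le_self) ?_
  · have h2 := this.2
    rwa [integral_neg] at h2
  · refine (ae_restrict_iff' hU.measurableSet).2 (Filter.Eventually.of_forall fun x hx τ' hτ' => ?_)
    rw [norm_neg]
    by_cases h : |lnorm N x - τ'| ≤ 1
    · have hmem : x ∈ Metric.closedBall (0 : Euc N) (exp (τ + 1 + 1)) := by
        refine Metric.closedBall_subset_closedBall ?_ (supp_ball (hU0 x hx) h)
        rw [Metric.mem_ball, Real.dist_eq] at hτ'
        exact exp_le_exp.2 (by linarith [(abs_lt.1 hτ').2])
      rw [hbd, indicator_of_mem hmem, norm_mul]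
      exact mul_le_mul (hC x hx) (hM _) (norm_nonneg _) ((abs_nonneg _).trans (hC x hx))
    · rw [hs' _ (not_le.1 h), mul_zero, norm_zero]
      refine indicator_nonneg (fun _ _ => mul_nonneg ((abs_nonneg _).trans (hC x hx)) hM0) _
  · refine (ae_restrict_iff' hU.measurableSet).2 (Filter.Eventually.of_forall fun x hx τ' hτ' => ?_)
    have h1 : HasDerivAt (fun τ => lnorm N x - τ) (-1) τ' := by
      simpa using (hasDerivAt_id τ').const_sub (lnorm N x)
    have h2 := ((hg (lnorm N x - τ')).comp τ' h1).const_mul (f x)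
    refine h2.congr_deriv ?_
    ring

end integr

lemma deriv_supp {g : ℝ → ℝ} (hs : ∀ t, 1 < |t| → g t = 0) : ∀ t, 1 < |t| → deriv g t = 0 := by
  intro t ht
  have : g =ᶠ[nhds t] fun _ => 0 := by
    filter_upwards [(isOpen_lt continuous_const continuous_abs).mem_nhds ht] with y hy
    exact hs y hy
  rw [this.deriv_eq]; simp

/-- The key integral inequality. -/
lemma key_ineq {N : ℕ} {Ω : Set (Euc N)} (hΩ : IsConeDomain N Ω)
    {lam1 : ℝ} {φ : Euc N → ℝ} (hphi : DirichletEigenpair N Ω lam1 φ)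
    {ρ μ γ A : ℝ} (hρ : 0 < ρ)
    (hA1 : 2 * γ + ((N:ℝ) - 2) = -A) (hA2 : γ ^ 2 + ((N:ℝ) - 2) * γ = lam1 - μ)
    {v : Euc N → ℝ} (hv : ContDiffOn ℝ 2 v (coneGT N ρ Ω))
    (hv0 : ∀ x ∈ coneGT N ρ Ω, 0 ≤ v x)
    (hvl : ∀ x ∈ coneGT N ρ Ω, lap N v x + μ * (‖x‖ ^ 2)⁻¹ * v x ≤ 0)
    {C : ℝ} (hC : ∀ x ∈ coneGT N ρ Ω, |v x * exp ((γ + A - 2) * lnorm N x)| ≤ C)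
    {β : ℝ → ℝ} (hβ : ContDiff ℝ 2 β) (hβ0 : ∀ t, 0 ≤ β t) (hβs : ∀ t, 1 < |t| → β t = 0)
    {τ : ℝ} (hτ : Real.log ρ + 1 < τ) :
    ∫ x in coneGT N ρ Ω, v x * exp ((γ + A - 2) * lnorm N x) * ext0 N φ x *
      (deriv (deriv β) (lnorm N x - τ) + A * deriv β (lnorm N x - τ)) ≤ 0 := by
  set U := coneGT N ρ Ω with hUdef
  have hU : IsOpen U := coneGT_isOpen hΩ hρ
  have hUc : ∀ x ∈ U, x ∈ cone N Ω := fun x hx => coneGT_sub hρ hx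
  have hU0 : ∀ x ∈ U, x ≠ 0 := fun x hx => (hUc x hx).1
  have cβ1 : ContDiff ℝ 1 (deriv β) := (contDiff_succ_iff_deriv (n := 1)).1
    (by simpa [one_add_one_eq_two] using hβ) |>.2.2
  have cβ2 : Continuous (deriv (deriv β)) := cβ1.continuous_deriv (by simp)
  have dβ : Differentiable ℝ β := hβ.differentiable (by simp)
  have dβ1 : Differentiable ℝ (deriv β) := cβ1.differentiable (by simp)
  have s1 := deriv_supp hβs
  have s2 := deriv_supp s1
  set G : ℝ → ℝ := fun t => deriv (deriv β) t + A * deriv β t with hG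
  have cG : Continuous G := cβ2.add (continuous_const.mul cβ1.continuous)
  have sG : ∀ t, 1 < |t| → G t = 0 := fun t ht => by simp [hG, s1 t ht, s2 t ht]
  set w : Euc N → ℝ := fun x => v x * exp ((γ + A - 2) * lnorm N x) with hw
  have cln : ContinuousOn (lnorm N) U := lnorm_contOn.mono hU0
  have cw : ContinuousOn w U :=
    hv.continuousOn.mul (Real.continuous_exp.comp_continuousOn (continuousOn_const.mul cln))
  have w0 : ∀ x ∈ U, 0 ≤ w x := fun x hx => mul_nonneg (hv0 x hx) (exp_pos _).le
  have cΦ : ContinuousOn (ext0 N φ) U := fun x hx =>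
    (ext0_cd hΩ hphi (hUc x hx)).continuousAt.continuousWithinAt
  set E : ℝ → ℝ := fun t => |G t| + |lam1| * β t with hE
  have cE : Continuous E := cG.abs.add (continuous_const.mul hβ.continuous)
  have sE : ∀ t, 1 < |t| → E t = 0 := fun t ht => by simp [hE, sG t ht, hβs t ht]
  have iE := int_term hU hU0 cw hC cE sE τ
  have iG : IntegrableOn (fun x => w x * ext0 N φ x * G (lnorm N x - τ)) U := by
    refine int_term (f := fun x => w x * ext0 N φ x) hU hU0 (cw.mul cΦ) (C := C) (fun x hx => ?_) cG sG τ
    rw [abs_mul]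
    have h1 := ext0_pos hphi (hUc x hx)
    have h2 := ext0_le hphi (hUc x hx)
    rw [abs_of_pos h1]
    exact (mul_le_of_le_one_right (abs_nonneg _) h2).trans (hC x hx)
  -- the main estimate
  have main : ∀ s : ℝ, 0 < s → ∫ x in U, w x * ext0 N φ x * G (lnorm N x - τ) ≤
      2 * s * ∫ x in U, w x * E (lnorm N x - τ) := by
    intro s hs
    obtain ⟨Θ, hΘ, hΘ0, hΘ2, hΘn, hΘb⟩ := exists_Theta s hs
    set h : ℝ → ℝ := fun t => exp ((γ + A) * t) * β (t - τ) with hh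
    have hhc : ContDiff ℝ 2 h := by
      have : ContDiff ℝ 2 (fun t => β (t - τ)) := hβ.comp (contDiff_id.sub contDiff_const)
      exact (by fun_prop : ContDiff ℝ 2 fun t => exp ((γ + A) * t)).mul this
    have hb1 : ∀ t, HasDerivAt (fun t => β (t - τ)) (deriv β (t - τ)) t := fun t =>
      HasDerivAt.comp_sub_const t τ (dβ (t - τ)).hasDerivAt
    have hb2 : ∀ t, HasDerivAt (fun t => deriv β (t - τ)) (deriv (deriv β) (t - τ)) t := fun t =>
      HasDerivAt.comp_sub_const t τ (dβ1 (t - τ)).hasDerivAt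
    have he : ∀ t, HasDerivAt (fun t => exp ((γ + A) * t)) ((γ + A) * exp ((γ + A) * t)) t := by
      intro t
      simpa using hasDeriv_cexp (γ + A) 1 t
    have hd1 : deriv h = fun t => exp ((γ + A) * t) * ((γ + A) * β (t - τ) + deriv β (t - τ)) := by
      funext t
      refine ((he t).mul (hb1 t)).deriv.trans ?_
      ring
    have hd2 : deriv (deriv h) = fun t => exp ((γ + A) * t) * ((γ + A) ^ 2 * β (t - τ)
        + 2 * (γ + A) * deriv β (t - τ) + deriv (deriv β) (t - τ)) := by
      rw [hd1]
      funext t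
      refine ((he t).mul (((hb1 t).const_mul (γ + A)).add (hb2 t))).deriv.trans ?_
      simp only [Pi.add_apply]
      ring
    classical
    set ζ : Euc N → ℝ := U.indicator fun x => h (lnorm N x) * Θ (ext0 N φ x) with hζ
    set K := Kset N Ω φ (τ - 1) (τ + 1) s with hK
    have ζU : ∀ x ∈ U, ζ =ᶠ[nhds x] fun x => h (lnorm N x) * Θ (ext0 N φ x) := by
      intro x hx
      filter_upwards [hU.mem_nhds hx] with y hy
      exact indicator_of_mem hy _
    have ζcd : ContDiffOn ℝ 2 ζ U := by
      intro x hx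
      refine ContDiffAt.contDiffWithinAt ?_
      refine ContDiffAt.congr_of_eventuallyEq ?_ (ζU x hx)
      exact (hhc.contDiffAt.comp x (lnorm_contDiffAt (hU0 x hx))).mul
        (hΘ.contDiffAt.comp x (ext0_cd hΩ hphi (hUc x hx)))
    have ζK : ∀ x, x ∉ K → ζ x = 0 := by
      intro x hx
      by_cases hxU : x ∈ U
      · rw [hζ, indicator_of_mem hxU]
        by_cases h1 : |lnorm N x - τ| ≤ 1
        · by_cases h2 : s ≤ ext0 N φ x
          · exfalso
            have := abs_le.1 h1
            exact hx (mem_Kset (hUc x hxU) (by linarith) (by linarith) h2)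
          · rw [hΘ0 _ (not_le.1 h2).le, mul_zero]
        · simp only [hh]
          rw [hβs _ (not_le.1 h1)]; ring
      · exact indicator_of_notMem hxU _
    obtain ⟨Y, Yi, Y0, YU, YUc⟩ := green hU hv (Kset_compact hΩ hphi (τ - 1) (τ + 1) s)
      (Kset_sub hΩ hphi hs hρ (by linarith)) ζcd ζK
    have Yset : ∫ x in U, Y x = 0 := by
      rw [setIntegral_eq_integral_of_forall_compl_eq_zero YUc, Y0]
    have pt : ∀ x ∈ U, w x * ext0 N φ x * G (lnorm N x - τ) ≤
        -Y x + 2 * s * (w x * E (lnorm N x - τ)) := by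
      intro x hx
      have hxc := hUc x hx
      have hΦ := ext0_pos hphi hxc
      have hlap := lap_sep hxc.1 (ext0_cd hΩ hphi hxc) (ext0_lap hphi hxc) hhc hΘ
      rw [YU x hx, lap_congr (ζU x hx), hlap, hd2, hd1]
      have ζx : ζ x = h (lnorm N x) * Θ (ext0 N φ x) := indicator_of_mem hx _
      rw [ζx]
      have hvx := hvl x hx
      have hv0x := hv0 x hx
      have hwx : w x = v x * (‖x‖ ^ 2)⁻¹ * exp ((γ + A) * lnorm N x) := by
        simp only [hw]
        rw [nsq_inv hxc.1, mul_assoc, ← Real.exp_add]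
        ring_nf
      have hw0x := w0 x hx
      set t := lnorm N x
      set Φ := ext0 N φ x
      obtain ⟨b1, b2⟩ := hΘb Φ hΦ.le
      have hQ : 0 ≤ ∑ i, pd N i (ext0 N φ) x ^ 2 := Finset.sum_nonneg fun i _ => sq_nonneg _
      set Q := ∑ i, pd N i (ext0 N φ) x ^ 2
      have hh0 : 0 ≤ h t := mul_nonneg (exp_pos _).le (hβ0 _)
      have hζ0 : 0 ≤ h t * Θ Φ := mul_nonneg hh0 (hΘn Φ hΦ.le)
      have hT3 : 0 ≤ v x * (h t * deriv (deriv Θ) Φ * Q) :=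
        mul_nonneg hv0x (mul_nonneg (mul_nonneg hh0 (hΘ2 _)) hQ)
      have hT4 : h t * Θ Φ * lap N v x ≤ h t * Θ Φ * (-(μ * (‖x‖ ^ 2)⁻¹ * v x)) :=
        mul_le_mul_of_nonneg_left (by linarith) hζ0
      -- main algebra
      have alg : v x * ((‖x‖ ^ 2)⁻¹ * ((exp ((γ + A) * t) * ((γ + A) ^ 2 * β (t - τ)
          + 2 * (γ + A) * deriv β (t - τ) + deriv (deriv β) (t - τ)) +
          (↑N - 2) * (exp ((γ + A) * t) * ((γ + A) * β (t - τ) + deriv β (t - τ)))) * Θ Φ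
          - lam1 * h t * (Φ * deriv Θ Φ))) + h t * Θ Φ * (μ * (‖x‖ ^ 2)⁻¹ * v x)
          = w x * (G (t - τ) * Θ Φ - lam1 * β (t - τ) * (Φ * deriv Θ Φ - Θ Φ)) := by
        rw [hwx]
        simp only [hh, hG]
        have e2 : μ = lam1 - (γ ^ 2 + (↑N - 2) * γ) := by linarith
        have e3 : A = -(2 * γ + (↑N - 2)) := by linarith
        rw [e2, e3]
        ring
      have b3 : w x * (Φ * G (t - τ)) ≤ w x * (G (t - τ) * Θ Φ
          - lam1 * β (t - τ) * (Φ * deriv Θ Φ - Θ Φ) + 2 * s * E (t - τ)) := by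
        refine mul_le_mul_of_nonneg_left ?_ hw0x
        have c1 : |G (t - τ) * (Θ Φ - Φ)| ≤ |G (t - τ)| * (2 * s) := by
          rw [abs_mul]; exact mul_le_mul_of_nonneg_left b1 (abs_nonneg _)
        have c2 : |lam1 * β (t - τ) * (Φ * deriv Θ Φ - Θ Φ)| ≤ |lam1| * β (t - τ) * (2 * s) := by
          rw [abs_mul, abs_mul, abs_of_nonneg (hβ0 _)]
          exact mul_le_mul_of_nonneg_left b2 (mul_nonneg (abs_nonneg _) (hβ0 _))
        have c3 := (abs_le.1 c1).1
        have c4 := (abs_le.1 c2).2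
        simp only [hE]
        linarith
      linarith
    calc ∫ x in U, w x * ext0 N φ x * G (lnorm N x - τ)
        ≤ ∫ x in U, (-Y x + 2 * s * (w x * E (lnorm N x - τ))) :=
          setIntegral_mono_on iG (Yi.integrableOn.neg.add (iE.const_mul _)) hU.measurableSet pt
      _ = 2 * s * ∫ x in U, w x * E (lnorm N x - τ) := by
          rw [integral_add (f := fun x => -Y x) (g := fun x => 2 * s * (w x * E (lnorm N x - τ)))
            Yi.integrableOn.neg (iE.const_mul _), integral_neg, Yset,
            integral_const_mul]
          simp
  have J0 : 0 ≤ ∫ x in U, w x * E (lnorm N x - τ) :=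
    setIntegral_nonneg hU.measurableSet fun x hx => mul_nonneg (w0 x hx)
      (add_nonneg (abs_nonneg _) (mul_nonneg (abs_nonneg _) (hβ0 _)))
  refine le_of_forall_pos_le_add fun δ hδ => ?_
  set J := ∫ x in U, w x * E (lnorm N x - τ)
  have := main (δ / (2 * (J + 1))) (by positivity)
  refine this.trans ?_
  have : 2 * (δ / (2 * (J + 1))) * J = δ * (J / (J + 1)) := by field_simp
  rw [this, zero_add]
  exact mul_le_of_le_one_right hδ.le ((div_le_one (by positivity)).2 (by linarith))


lemma measurable_lnorm (N : ℕ) : Measurable (lnorm N) :=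
  Real.measurable_log.comp measurable_norm

/-- Tail bound for a truncated supersolution. -/
lemma tail_bound {N : ℕ} {U : Set (Euc N)} (hU : IsOpen U) (hU0 : ∀ x ∈ U, x ≠ 0)
    {f W : Euc N → ℝ} (hf : ContinuousOn f U) {C : ℝ} (hC : ∀ x ∈ U, |f x| ≤ C)
    (hW : IntegrableOn W U) (hW0 : ∀ x ∈ U, 0 ≤ W x)
    {k K : ℝ} (hk : 0 ≤ k) (hK : 0 ≤ K)
    (hfW : ∀ x ∈ U, 0 ≤ lnorm N x → f x ≤ k * exp (-N * lnorm N x) + K * W x)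
    {β : ℝ → ℝ} (hβ : Continuous β) (hβ0 : ∀ t, 0 ≤ β t) (hβ1 : ∀ t, β t ≤ 1)
    (hβs : ∀ t, 1 < |t| → β t = 0) {τ : ℝ} (hτ : 1 ≤ τ) :
    ∫ x in U, f x * β (lnorm N x - τ) ≤
      k * (exp (2 * N) * volume.real (Metric.ball (0 : Euc N) 1)) +
        K * ∫ x in U ∩ {x | τ - 1 ≤ lnorm N x}, W x := by
  set B := Metric.closedBall (0 : Euc N) (exp (τ + 1)) with hB
  set S : Set (Euc N) := {x | τ - 1 ≤ lnorm N x} with hS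
  have mS : MeasurableSet S := measurableSet_le measurable_const (measurable_lnorm N)
  have mB : MeasurableSet B := Metric.isClosed_closedBall.measurableSet
  have i1 : Integrable (B.indicator fun _ => k * exp (-N * (τ - 1))) :=
    (integrable_indicator_iff mB).2
      (integrableOn_const (isCompact_closedBall _ _).measure_lt_top.ne)
  have i2 : IntegrableOn (S.indicator W) U := hW.indicator mS
  have pt : ∀ x ∈ U, f x * β (lnorm N x - τ) ≤
      B.indicator (fun _ => k * exp (-N * (τ - 1))) x + K * S.indicator W x := by
    intro x hx
    have n1 : 0 ≤ B.indicator (fun _ => k * exp (-N * (τ - 1))) x :=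
      indicator_nonneg (fun _ _ => mul_nonneg hk (exp_pos _).le) _
    have n2 : 0 ≤ S.indicator W x := by
      by_cases h : x ∈ S
      · rw [indicator_of_mem h]; exact hW0 x hx
      · rw [indicator_of_notMem h]
    by_cases h : |lnorm N x - τ| ≤ 1
    · have h' := abs_le.1 h
      have hxS : x ∈ S := by
        change τ - 1 ≤ lnorm N x
        linarith
      rw [indicator_of_mem (supp_ball (hU0 x hx) h), indicator_of_mem hxS]
      have hb := hfW x hx (by linarith)
      have he : exp (-N * lnorm N x) ≤ exp (-N * (τ - 1)) := by
        refine exp_le_exp.2 ?_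
        have : (0:ℝ) ≤ N := Nat.cast_nonneg N
        nlinarith
      have hr : 0 ≤ k * exp (-N * lnorm N x) + K * W x :=
        add_nonneg (mul_nonneg hk (exp_pos _).le) (mul_nonneg hK (hW0 x hx))
      calc f x * β (lnorm N x - τ)
          ≤ (k * exp (-N * lnorm N x) + K * W x) * β (lnorm N x - τ) :=
            mul_le_mul_of_nonneg_right hb (hβ0 _)
        _ ≤ k * exp (-N * lnorm N x) + K * W x := mul_le_of_le_one_right hr (hβ1 _)
        _ ≤ k * exp (-N * (τ - 1)) + K * W x := by
            have := mul_le_mul_of_nonneg_left he hk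
            linarith
    · rw [hβs _ (not_le.1 h), mul_zero]
      exact add_nonneg n1 (mul_nonneg hK n2)
  have step1 := setIntegral_mono_on (int_term hU hU0 hf hC hβ hβs τ)
    (i1.integrableOn.add (i2.const_mul K)) hU.measurableSet pt
  simp only [Pi.add_apply] at step1
  refine step1.trans ?_
  rw [integral_add (f := fun x => B.indicator (fun _ => k * exp (-N * (τ - 1))) x)
    (g := fun x => K * S.indicator W x) i1.integrableOn (i2.const_mul K), integral_const_mul,
    setIntegral_indicator mS]
  refine add_le_add ?_ le_rfl
  have step2 : ∫ x in U, B.indicator (fun _ => k * exp (-N * (τ - 1))) x ≤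
      ∫ x, B.indicator (fun _ => k * exp (-N * (τ - 1))) x :=
    setIntegral_le_integral i1 (Filter.Eventually.of_forall fun x =>
      indicator_nonneg (fun _ _ => mul_nonneg hk (exp_pos _).le) _)
  refine step2.trans (le_of_eq ?_)
  rw [integral_indicator_const _ mB, smul_eq_mul]
  have hvol : volume.real B = exp (τ + 1) ^ N * volume.real (Metric.ball (0 : Euc N) 1) := by
    rw [hB, Measure.real, Measure.addHaar_closedBall _ _ (exp_pos _).le, ENNReal.toReal_mul,
      ENNReal.toReal_ofReal (by positivity), finrank_euclideanSpace_fin]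
    rfl
  rw [hvol, ← Real.exp_nat_mul]
  have : exp (2 * (N:ℝ)) = exp (N * (τ + 1)) * exp (-N * (τ - 1)) := by
    rw [← Real.exp_add]; ring_nf
  rw [this]; ring

lemma tail_tendsto {N : ℕ} {U : Set (Euc N)} (hU : IsOpen U) {W : Euc N → ℝ}
    (hW : IntegrableOn W U) :
    Filter.Tendsto (fun n : ℕ => ∫ x in U ∩ {x | (n:ℝ) ≤ lnorm N x}, W x)
      Filter.atTop (nhds 0) := by
  have h := tendsto_setIntegral_of_antitone (μ := volume) (f := W)
    (s := fun n : ℕ => U ∩ {x | (n:ℝ) ≤ lnorm N x})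
    (fun n => hU.measurableSet.inter (measurableSet_le measurable_const (measurable_lnorm N)))
    (fun a b hab x hx => ⟨hx.1, le_trans (b := (b:ℝ)) (Nat.cast_le.2 hab) hx.2⟩)
    ⟨0, hW.mono_set inter_subset_left⟩
  have e : (⋂ n : ℕ, U ∩ {x : Euc N | (n:ℝ) ≤ lnorm N x}) = ∅ := by
    refine eq_empty_of_forall_notMem fun x hx => ?_
    obtain ⟨n, hn⟩ := exists_nat_gt (lnorm N x)
    exact absurd (mem_iInter.1 hx n).2 (not_le.2 hn)
  rw [e] at h
  simpa using h

lemma nonexist {N : ℕ} {Ω : Set (Euc N)} (hΩ : IsConeDomain N Ω)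
    {lam1 : ℝ} {φ : Euc N → ℝ} (hphi : DirichletEigenpair N Ω lam1 φ)
    {p q ρ μ : ℝ} (hp : 0 < p) (hρ : 0 < ρ) (hμ : μ ≤ CHconst N lam1)
    (hpN : p * (-(gammaStar N lam1 μ)) ≤ N)
    {u : Euc N → ℝ} (hu : IsPosSolZ N ρ μ p q Ω u) : False := by
  obtain ⟨A, hA, hA1, hA2⟩ := gamma_facts hμ
  set γ := gammaStar N lam1 μ with hγ
  obtain ⟨ucd, -, upos, ufin, uin⟩ := hu
  set U := coneGT N ρ Ω with hUdef
  have hU : IsOpen U := coneGT_isOpen hΩ hρ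
  have hUc : ∀ x ∈ U, x ∈ cone N Ω := fun x hx => coneGT_sub hρ hx
  have hU0 : ∀ x ∈ U, x ≠ 0 := fun x hx => (hUc x hx).1
  have cln : ContinuousOn (lnorm N) U := lnorm_contOn.mono hU0
  have cΦ : ContinuousOn (ext0 N φ) U := fun x hx =>
    (ext0_cd hΩ hphi (hUc x hx)).continuousAt.continuousWithinAt
  have Lu : ∀ x ∈ U, lap N u x + μ * (‖x‖ ^ 2)⁻¹ * u x ≤ 0 := by
    intro x hx
    have h1 := uin x hx
    rw [rpow_neg_two] at h1
    have h2 : 0 ≤ (∫⁻ y in U, ENNReal.ofReal (u y ^ p)).toReal * u x ^ q :=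
      mul_nonneg ENNReal.toReal_nonneg (rpow_nonneg (upos x hx).le _)
    linarith
  set Z : Euc N → ℝ := fun x => exp (γ * lnorm N x) * ext0 N φ x with hZ
  have Zpos : ∀ x ∈ U, 0 < Z x := fun x hx => mul_pos (exp_pos _) (ext0_pos hphi (hUc x hx))
  have hec : ContDiff ℝ 2 (fun t : ℝ => exp (γ * t)) := by fun_prop
  have Zcd : ∀ x ∈ U, ContDiffAt ℝ 2 Z x := fun x hx =>
    (hec.contDiffAt.comp x (lnorm_contDiffAt (hU0 x hx))).mul (ext0_cd hΩ hphi (hUc x hx))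
  have hd1 : deriv (fun t : ℝ => exp (γ * t)) = fun t => γ * exp (γ * t) := by
    funext t
    have := (hasDeriv_cexp γ 1 t).deriv
    simpa using this
  have hd2 : deriv (deriv (fun t : ℝ => exp (γ * t))) = fun t => γ * γ * exp (γ * t) := by
    rw [hd1]
    funext t
    exact (hasDeriv_cexp γ γ t).deriv
  have LZ : ∀ x ∈ U, lap N Z x + μ * (‖x‖ ^ 2)⁻¹ * Z x ≤ 0 := by
    intro x hx
    have hxc := hUc x hx
    have := lap_sep hxc.1 (ext0_cd hΩ hphi hxc) (ext0_lap hphi hxc) hec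
      (contDiff_id (𝕜 := ℝ) (E := ℝ))
    rw [hd2, hd1] at this
    have hid : deriv (id : ℝ → ℝ) = fun _ => 1 := by funext t; simp
    rw [hid] at this
    simp only [id, deriv_const', mul_zero, zero_mul, add_zero, mul_one] at this
    have e2 : μ = lam1 - (γ ^ 2 + (↑N - 2) * γ) := by linarith
    refine le_of_eq ?_
    change lap N (fun y => exp (γ * lnorm N y) * ext0 N φ y) x + _ = 0
    rw [this]
    simp only [hZ]
    rw [e2]
    ring
  set v : Euc N → ℝ := fun x => Z x * u x / (Z x + u x) with hv
  have vpos : ∀ x ∈ U, 0 < v x := fun x hx =>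
    div_pos (mul_pos (Zpos x hx) (upos x hx)) (add_pos (Zpos x hx) (upos x hx))
  have vZ : ∀ x ∈ U, v x ≤ Z x := fun x hx => by
    have h1 := Zpos x hx
    have h2 := upos x hx
    rw [hv]; simp only
    rw [div_le_iff₀ (by positivity)]
    nlinarith
  have vu : ∀ x ∈ U, v x ≤ u x := fun x hx => by
    have h1 := Zpos x hx
    have h2 := upos x hx
    rw [hv]; simp only
    rw [div_le_iff₀ (by positivity)]
    nlinarith
  have uat : ∀ x ∈ U, ContDiffAt ℝ 2 u x := fun x hx => ucd.contDiffAt (hU.mem_nhds hx)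
  have vcd : ContDiffOn ℝ 2 v U := fun x hx =>
    (((Zcd x hx).mul (uat x hx)).div ((Zcd x hx).add (uat x hx))
      (add_pos (Zpos x hx) (upos x hx)).ne').contDiffWithinAt
  have Lv : ∀ x ∈ U, lap N v x + μ * (‖x‖ ^ 2)⁻¹ * v x ≤ 0 := fun x hx =>
    lap_trunc (Zcd x hx) (uat x hx) (Zpos x hx) (upos x hx) (LZ x hx) (Lu x hx)
  have N0 : (0:ℝ) ≤ N := Nat.cast_nonneg N
  -- normalised
  have vhat : ∀ x ∈ U, v x * exp (-γ * lnorm N x) ≤ 1 := by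
    intro x hx
    have h1 : v x ≤ exp (γ * lnorm N x) :=
      (vZ x hx).trans (mul_le_of_le_one_right (exp_pos _).le (ext0_le hphi (hUc x hx)))
    calc v x * exp (-γ * lnorm N x) ≤ exp (γ * lnorm N x) * exp (-γ * lnorm N x) :=
          mul_le_mul_of_nonneg_right h1 (exp_pos _).le
      _ = 1 := by rw [← Real.exp_add]; simp
  have wexp : ∀ x, v x * exp ((γ + A - 2) * lnorm N x)
      = v x * exp (-γ * lnorm N x) * exp (-N * lnorm N x) := by
    intro x
    rw [mul_assoc, ← Real.exp_add]
    have : A = -(2 * γ + ((N:ℝ) - 2)) := by linarith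
    rw [this]; ring_nf
  set C := exp (-N * Real.log ρ) with hCdef
  have hC : ∀ x ∈ U, |v x * exp ((γ + A - 2) * lnorm N x)| ≤ C := by
    intro x hx
    rw [abs_of_nonneg (mul_nonneg (vpos x hx).le (exp_pos _).le), wexp]
    calc v x * exp (-γ * lnorm N x) * exp (-N * lnorm N x) ≤ 1 * exp (-N * lnorm N x) :=
          mul_le_mul_of_nonneg_right (vhat x hx) (exp_pos _).le
      _ ≤ C := by
          rw [one_mul]
          have := lnorm_gt hρ hx
          exact exp_le_exp.2 (by nlinarith)
  set f : Euc N → ℝ := fun x => v x * exp ((γ + A - 2) * lnorm N x) * ext0 N φ x with hf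
  have fcont : ContinuousOn f U := (vcd.continuousOn.mul
    (Real.continuous_exp.comp_continuousOn (continuousOn_const.mul cln))).mul cΦ
  have fpos : ∀ x ∈ U, 0 < f x := fun x hx =>
    mul_pos (mul_pos (vpos x hx) (exp_pos _)) (ext0_pos hphi (hUc x hx))
  have fC : ∀ x ∈ U, |f x| ≤ C := by
    intro x hx
    simp only [hf]
    rw [abs_mul, abs_of_pos (ext0_pos hphi (hUc x hx))]
    exact (mul_le_of_le_one_right (abs_nonneg _) (ext0_le hphi (hUc x hx))).trans (hC x hx)
  -- the bump function
  let b : ContDiffBump (0:ℝ) := ⟨1 / 2, 1, by norm_num, by norm_num⟩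
  set β : ℝ → ℝ := fun t => b t with hβdef
  have hβ : ContDiff ℝ 2 β := b.contDiff
  have hβ0 : ∀ t, 0 ≤ β t := fun t => b.nonneg
  have hβ1 : ∀ t, β t ≤ 1 := fun t => b.le_one
  have hβp : ∀ t, |t| < 1 → 0 < β t := fun t ht => b.pos_of_mem_ball (by simpa using ht)
  have hβs : ∀ t, 1 < |t| → β t = 0 := fun t ht => b.zero_of_le_dist (by simpa using ht.le)
  have cβ1 : ContDiff ℝ 1 (deriv β) := (contDiff_succ_iff_deriv (n := 1)).1
    (by simpa [one_add_one_eq_two] using hβ) |>.2.2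
  have cβ2 : Continuous (deriv (deriv β)) := cβ1.continuous_deriv (by simp)
  have dβ : Differentiable ℝ β := hβ.differentiable (by simp)
  have dβ1 : Differentiable ℝ (deriv β) := cβ1.differentiable (by simp)
  have s1 := deriv_supp hβs
  have s2 := deriv_supp s1
  set m : ℝ → ℝ := fun τ => ∫ x in U, f x * β (lnorm N x - τ) with hm
  have m1 : ∀ τ, HasDerivAt m (-∫ x in U, f x * deriv β (lnorm N x - τ)) τ := fun τ =>
    deriv_term hU hU0 fcont fC (fun t => (dβ t).hasDerivAt) cβ1.continuous hβs s1 τ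
  have m2 : ∀ τ, HasDerivAt (fun τ => -∫ x in U, f x * deriv β (lnorm N x - τ))
      (∫ x in U, f x * deriv (deriv β) (lnorm N x - τ)) τ := fun τ =>
    (deriv_term hU hU0 fcont fC (fun t => (dβ1 t).hasDerivAt) cβ2 s1 s2 τ).neg.congr_deriv
      (neg_neg _)
  have mono := ode_mono (T0 := Real.log ρ + 1) hA m1 m2 (by
    intro τ hτ
    have key := key_ineq hΩ hphi hρ hA1 hA2 vcd (fun x hx => (vpos x hx).le) Lv hC hβ hβ0 hβs hτ
    have i1 := int_term hU hU0 fcont fC cβ1.continuous s1 τ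
    have i2 := int_term hU hU0 fcont fC cβ2 s2 τ
    refine le_of_eq_of_le ?_ key
    rw [mul_neg, sub_neg_eq_add, ← integral_const_mul, ← integral_add i2 (i1.const_mul A)]
    refine integral_congr_ae (Filter.Eventually.of_forall fun x => ?_)
    simp only [hf]
    ring) (fun τ => setIntegral_nonneg hU.measurableSet
      fun x hx => mul_nonneg (fpos x hx).le (hβ0 _))
  -- positivity
  set τ0 := Real.log ρ + 2 with hτ0
  have mpos : 0 < m τ0 := by
    have hInt := int_term hU hU0 fcont fC hβ.continuous hβs τ0
    have hnn : 0 ≤ᵐ[volume.restrict U] fun x => f x * β (lnorm N x - τ0) :=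
      (ae_restrict_iff' hU.measurableSet).2 (Filter.Eventually.of_forall fun x hx =>
        mul_nonneg (fpos x hx).le (hβ0 _))
    refine (setIntegral_pos_iff_support_of_nonneg_ae hnn hInt).2 ?_
    have hV : IsOpen (U ∩ lnorm N ⁻¹' (Metric.ball τ0 1)) :=
      cln.isOpen_inter_preimage hU Metric.isOpen_ball
    obtain ⟨ω, hω⟩ := hΩ.2.1.nonempty
    have nω : ‖ω‖ = 1 := by simpa using hΩ.1 hω
    have nx : ‖exp τ0 • ω‖ = exp τ0 := by
      rw [norm_smul, nω, mul_one, Real.norm_of_nonneg (exp_pos _).le]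
    have hne : (U ∩ lnorm N ⁻¹' (Metric.ball τ0 1)).Nonempty := by
      refine ⟨exp τ0 • ω, ⟨?_, ?_⟩, ?_⟩
      · rw [nx]
        calc ρ = exp (Real.log ρ) := (exp_log hρ).symm
          _ < exp τ0 := exp_lt_exp.2 (by linarith)
      · rw [nx, smul_smul, inv_mul_cancel₀ (exp_pos _).ne', one_smul]
        exact hω
      · have : lnorm N (exp τ0 • ω) = τ0 := by
          unfold lnorm; rw [nx, Real.log_exp]
        rw [mem_preimage, this]
        exact Metric.mem_ball_self one_pos
    refine (hV.measure_pos volume hne).trans_le (measure_mono fun x hx => ⟨?_, hx.1⟩)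
    have h2 : |lnorm N x - τ0| < 1 := by
      have := hx.2
      rwa [mem_preimage, Metric.mem_ball, Real.dist_eq] at this
    exact (mul_pos (fpos x hx.1) (hβp _ h2)).ne'
  -- integrability of the p-th power
  set W : Euc N → ℝ := fun x => u x ^ p with hW
  have Wcont : ContinuousOn W U := fun x hx =>
    (ucd.continuousOn x hx).rpow_const (Or.inl (upos x hx).ne')
  have W0 : ∀ x ∈ U, 0 ≤ W x := fun x hx => rpow_nonneg (upos x hx).le _
  have Wint : IntegrableOn W U := by
    refine ⟨Wcont.aestronglyMeasurable hU.measurableSet, ?_⟩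
    rw [hasFiniteIntegral_iff_ofReal
      ((ae_restrict_iff' hU.measurableSet).2 (Filter.Eventually.of_forall W0))]
    exact ufin
  set V := exp (2 * (N:ℝ)) * volume.real (Metric.ball (0 : Euc N) 1) with hVdef
  have V0 : 0 ≤ V := mul_nonneg (exp_pos _).le measureReal_nonneg
  set δ := m τ0 with hδ
  set k := δ / (2 * (V + 1)) with hk
  have k0 : 0 < k := by positivity
  set K := (k ^ p)⁻¹ with hK
  have K0 : 0 < K := inv_pos.2 (rpow_pos_of_pos k0 p)
  have fW : ∀ x ∈ U, 0 ≤ lnorm N x → f x ≤ k * exp (-N * lnorm N x) + K * W x := by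
    intro x hx ht
    have hvx := vpos x hx
    set t := lnorm N x with htdef
    set y := v x * exp (-γ * t) with hy
    have y0 : 0 < y := mul_pos hvx (exp_pos _)
    have y1 : y ≤ 1 := vhat x hx
    have f1 : f x ≤ y * exp (-N * t) := by
      simp only [hf]
      rw [wexp]
      exact mul_le_of_le_one_right (mul_pos y0 (exp_pos _)).le (ext0_le hphi (hUc x hx))
    rcases le_total y k with h | h
    · have := mul_le_mul_of_nonneg_right h (exp_pos (-N * t)).le
      have := mul_nonneg K0.le (W0 x hx)
      linarith
    · have a1 : k ^ p ≤ y ^ p := rpow_le_rpow k0.le h hp.le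
      have a2 : y ^ p ≤ W x * exp (N * t) := by
        rw [hy, mul_rpow hvx.le (exp_pos _).le, ← Real.exp_mul]
        refine mul_le_mul (rpow_le_rpow hvx.le (vu x hx) hp.le) (exp_le_exp.2 ?_)
          (exp_pos _).le (W0 x hx)
        nlinarith
      have a3 : 1 ≤ K * (W x * exp (N * t)) := by
        rw [hK, ← div_eq_inv_mul, le_div_iff₀ (rpow_pos_of_pos k0 p), one_mul]
        exact a1.trans a2
      have e1 : exp (N * t) * exp (-N * t) = 1 := by rw [← Real.exp_add]; simp
      have a4 : y * exp (-N * t) ≤ K * (W x * exp (N * t)) * exp (-N * t) :=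
        mul_le_mul_of_nonneg_right (y1.trans a3) (exp_pos _).le
      have e2 : K * (W x * exp (N * t)) * exp (-N * t) = K * W x := by
        rw [mul_assoc, mul_assoc, e1, mul_one]
      have := mul_pos k0 (exp_pos (-N * t))
      linarith
  have ev1 := (tail_tendsto hU Wint).eventually
    (gt_mem_nhds (show 0 < δ / (4 * K) by positivity))
  obtain ⟨n, hn1, hn2⟩ := (ev1.and (Filter.eventually_ge_atTop ⌈τ0⌉₊)).exists
  have hn3 : τ0 ≤ (n:ℝ) + 1 := by
    have := Nat.ceil_le.1 hn2
    linarith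
  have hlow := mono τ0 ((n:ℝ) + 1) (by linarith) hn3
  have hup := tail_bound hU hU0 fcont fC Wint W0 k0.le K0.le fW hβ.continuous hβ0 hβ1 hβs
    (τ := (n:ℝ) + 1) (by linarith [Nat.cast_nonneg (α := ℝ) n])
  rw [add_sub_cancel_right] at hup
  have b1 : k * V ≤ δ / 2 := by
    have : k * V = δ / 2 * (V / (V + 1)) := by rw [hk]; field_simp
    rw [this]
    exact mul_le_of_le_one_right (by positivity) ((div_le_one (by positivity)).2 (by linarith))
  have b2 : K * ∫ x in U ∩ {x | (n:ℝ) ≤ lnorm N x}, W x ≤ δ / 4 := by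
    have h := mul_le_mul_of_nonneg_left hn1.le K0.le
    have e : K * (δ / (4 * K)) = δ / 4 := by field_simp
    linarith
  have : m τ0 ≤ k * V + K * ∫ x in U ∩ {x | (n:ℝ) ≤ lnorm N x}, W x := hlow.trans hup
  linarith


/-- for `μ ≤ C_{H,Ω}` and `(q-1)·|γ_*| > 2`, the inequality `(Z)` has a
positive solution in `C_Ω^ρ` iff `p·|γ_*| > N`. -/
theorem existence_iff_alpha_zero
    (N : ℕ) (hN : 2 ≤ N) (Ω : Set (Euc N)) (hΩ : IsConeDomain N Ω)
    (lam1 : ℝ) (φ : Euc N → ℝ) (hphi : DirichletEigenpair N Ω lam1 φ)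
    (p q ρ μ : ℝ) (hp : 0 < p) (hρ : 0 < ρ)
    (hμ : μ ≤ CHconst N lam1)
    (hq : 2 < (q - 1) * (-(gammaStar N lam1 μ))) :
    (∃ u : Euc N → ℝ, IsPosSolZ N ρ μ p q Ω u) ↔
      (N : ℝ) < p * (-(gammaStar N lam1 μ)) := by
  refine ⟨fun ⟨u, hu⟩ => ?_, fun h => exists_sol hN hΩ hphi hp hρ hμ hq h⟩
  by_contra hcon
  exact nonexist hΩ hphi hp hρ hμ (not_lt.1 hcon) hu
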